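/- arXiv:2410.19497 — 11 statements merged into one kernel-verified Lean document; each statement's English description precedes it below -/
import Mathlib

section
/- Fix real numbers L > 0, D > 0 and an angle θ ∈ (−π/2, π/2). Then ψ₂ · Δ > 1, where ψ₂ = (1/(2L)) ∫_{−L}^{L} ((x − D_s)² + D_c²)⁻¹ dx and Δ = √((D² − L²)² + (2 L D_c)²). -/
open Real

/-!
Let `α` be the angle that the segment `[a, b] × {0}` subtends at the point `(s, c)`, `c > 0`, and
let `p`, `q` be the distances from that point to the endpoints. The integral of `dist⁻²` over the
segment is `α / c`, while computing the area of the triangle in two ways gives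
`p * q * sin α = (b - a) * c`. Hence the mean of `dist⁻²`, times `p * q`, is `α / sin α > 1`.
For `[-L, L]` and the point `(D sin θ, D cos θ)` the product `p * q` is `Δ`.
-/

theorem sin_arctan_sub_arctan (u v : ℝ) :
    sin (arctan v - arctan u) = (v - u) / √((1 + u ^ 2) * (1 + v ^ 2)) := by
  rw [sin_sub, sin_arctan, sin_arctan, cos_arctan, cos_arctan, sqrt_mul (by positivity)]
  field_simp

theorem sub_lt_arctan_sub_arctan_mul_sqrt {u v : ℝ} (huv : u < v) :
    v - u < (arctan v - arctan u) * √((1 + u ^ 2) * (1 + v ^ 2)) := by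
  rw [← div_lt_iff₀ (by positivity), ← sin_arctan_sub_arctan]
  exact sin_lt (sub_pos.2 (arctan_strictMono huv))

theorem integral_inv_sub_sq_add_sq (a b s : ℝ) {c : ℝ} (hc : c ≠ 0) :
    ∫ x in a..b, ((x - s) ^ 2 + c ^ 2)⁻¹ =
      (arctan ((b - s) / c) - arctan ((a - s) / c)) / c := by
  simp only [add_comm _ (c ^ 2)]
  rw [intervalIntegral.integral_comp_sub_right (fun x ↦ (c ^ 2 + x ^ 2)⁻¹),
    integral_inv_sq_add_sq hc, inv_mul_eq_div]

theorem sq_add_sq_eq_sq_mul_one_add_div_sq (x : ℝ) {c : ℝ} (hc : c ≠ 0) :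
    x ^ 2 + c ^ 2 = c ^ 2 * (1 + (x / c) ^ 2) := by
  field_simp
  ring

theorem sqrt_sq_add_sq_mul_sq_add_sq (x y : ℝ) {c : ℝ} (hc : c ≠ 0) :
    √((x ^ 2 + c ^ 2) * (y ^ 2 + c ^ 2)) =
      c ^ 2 * √((1 + (x / c) ^ 2) * (1 + (y / c) ^ 2)) := by
  rw [sq_add_sq_eq_sq_mul_one_add_div_sq x hc, sq_add_sq_eq_sq_mul_one_add_div_sq y hc,
    mul_mul_mul_comm, sqrt_mul (by positivity), sqrt_mul_self (by positivity)]

theorem psi2_Delta_gt_one_general {a b : ℝ} (hab : a < b) (s : ℝ) {c : ℝ} (hc : c ≠ 0) :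
    1 < ((1 / (b - a)) * ∫ x in a..b, ((x - s) ^ 2 + c ^ 2)⁻¹) *
      √(((a - s) ^ 2 + c ^ 2) * ((b - s) ^ 2 + c ^ 2)) := by
  wlog hc_pos : 0 < c generalizing c
  · have h := this (neg_ne_zero.2 hc) (neg_pos.2 (hc.lt_of_le (not_lt.1 hc_pos)))
    simpa only [neg_sq] using h
  rw [integral_inv_sub_sq_add_sq a b s hc, sqrt_sq_add_sq_mul_sq_add_sq _ _ hc]
  set u := (a - s) / c with hu
  set v := (b - s) / c with hv
  have hlen : v - u = (b - a) / c := by rw [hu, hv, ← sub_div, sub_sub_sub_cancel_right]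
  have huv : u < v := by rw [hu, hv]; gcongr
  have hba : 0 < b - a := sub_pos.2 hab
  calc
    1 < (arctan v - arctan u) * √((1 + u ^ 2) * (1 + v ^ 2)) / (v - u) :=
      (one_lt_div (sub_pos.2 huv)).2 (sub_lt_arctan_sub_arctan_mul_sqrt huv)
    _ = 1 / (b - a) * ((arctan v - arctan u) / c) *
        (c ^ 2 * √((1 + u ^ 2) * (1 + v ^ 2))) := by
      rw [hlen]
      field_simp

theorem sq_sub_sq_add_sq_eq_mul (L D θ : ℝ) :
    (D ^ 2 - L ^ 2) ^ 2 + (2 * L * (D * cos θ)) ^ 2 =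
      ((-L - D * sin θ) ^ 2 + (D * cos θ) ^ 2) * ((L - D * sin θ) ^ 2 + (D * cos θ) ^ 2) := by
  have hD : D ^ 2 = (D * sin θ) ^ 2 + (D * cos θ) ^ 2 := by
    rw [mul_pow, mul_pow, ← mul_add, sin_sq_add_cos_sq, mul_one]
  rw [hD]
  ring

theorem psi2_Delta_gt_one (L D θ : ℝ) (hL : 0 < L) (hD : 0 < D)
    (hθ : θ ∈ Set.Ioo (-(π / 2)) (π / 2)) :
    ((1 / (2 * L)) * ∫ x in (-L)..L, ((x - D * sin θ) ^ 2 + (D * cos θ) ^ 2)⁻¹) *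
      Real.sqrt ((D ^ 2 - L ^ 2) ^ 2 + (2 * L * (D * cos θ)) ^ 2) > 1 := by
  have hc : D * cos θ ≠ 0 := (mul_pos hD (cos_pos_of_mem_Ioo hθ)).ne'
  simpa only [sq_sub_sq_add_sq_eq_mul, sub_neg_eq_add, ← two_mul] using
    psi2_Delta_gt_one_general (neg_lt_self hL) (D * sin θ) hc
end

section
/- Let W be the real symmetric 3×3 matrix with rows (ψ₂, 0, 0), (0, D_c⁴·ψ₆, D_c³·ψ̄₅), (0, D_c³·ψ̄₅, D_c²·ψ₄ − D_c⁴·ψ₆). Then the characteristic polynomial of W factors as (X − γ₁)(X − γ₂)(X − γ₃) with γ₁ = ψ₂, γ₂ = (D_c²/2)·[ψ₄ + √((ψ₄ − 2 D_c² ψ₆)² + 4 D_c² ψ̄₅²)], γ₃ = (D_c²/2)·[ψ₄ − √((ψ₄ − 2 D_c² ψ₆)² + 4 D_c² ψ̄₅²)]; moreover γ₁ > γ₂ > γ₃ > 0. -/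
open Real Polynomial

/-!
After the substitution `u = x - Ds`, the lower `2 × 2` block of `W` is, up to the factor `Dc ^ 2`,
the Gram matrix of the functions `Dc` and `u` for the weight `(u ^ 2 + Dc ^ 2)⁻³`. Hence it is
positive definite by the strict Cauchy–Schwarz inequality, and its trace `Dc ^ 2 * ψ₄` is at most
`ψ₂`, so both of its eigenvalues are positive and less than `ψ₂`. They are distinct: the
off-diagonal entry has an elementary primitive and vanishes only when the interval is symmetric
about `0`, in which case integrating the derivative of `u / (u ^ 2 + Dc ^ 2) ^ 2` shows that the
diagonal entries differ.
-/

section Matrix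

variable {R : Type*} [CommRing R]

lemma charpoly_fin_three_of_block (p a b c d : R) :
    (!![p, 0, 0; 0, a, b; 0, c, d]).charpoly = (X - C p) * (!![a, b; c, d]).charpoly := by
  simp only [Matrix.charpoly, Matrix.det_fin_three, Matrix.det_fin_two, Matrix.charmatrix_apply,
    Matrix.diagonal_apply, Matrix.of_apply, Matrix.cons_val, Fin.reduceEq, if_true, if_false,
    map_zero]
  ring

lemma charpoly_fin_two_eq_mul {a b c d x y : R} (h_trace : a + d = x + y)
    (h_det : a * d - b * c = x * y) :
    (!![a, b; c, d]).charpoly = (X - C x) * (X - C y) := by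
  nontriviality R
  rw [Matrix.charpoly_fin_two, Matrix.trace_fin_two_of, Matrix.det_fin_two_of, h_trace, h_det,
    C_add, C_mul]
  ring

end Matrix

lemma sq_integral_mul_lt_integral_mul_integral_sq_mul {a b : ℝ} {w : ℝ → ℝ} (hab : a < b)
    (hw : ContinuousOn w (Set.Icc a b)) (hpos : ∀ x ∈ Set.Icc a b, 0 < w x) :
    (∫ x in a..b, x * w x) ^ 2 < (∫ x in a..b, w x) * ∫ x in a..b, x ^ 2 * w x := by
  have h_int {f : ℝ → ℝ} (hf : ContinuousOn f (Set.Icc a b)) :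
      IntervalIntegrable f MeasureTheory.volume a b :=
    hf.intervalIntegrable_of_Icc hab.le
  have h_mass : 0 < ∫ x in a..b, w x :=
    intervalIntegral.integral_pos hab hw (fun x hx ↦ (hpos x (Set.Ioc_subset_Icc_self hx)).le)
      ⟨a, Set.left_mem_Icc.2 hab.le, hpos a (Set.left_mem_Icc.2 hab.le)⟩
  have h_expand (s : ℝ) : ∫ x in a..b, (x - s) ^ 2 * w x =
      (∫ x in a..b, w x) * (s * s) + (-2 * ∫ x in a..b, x * w x) * s +
        ∫ x in a..b, x ^ 2 * w x := by
    have h_split (x : ℝ) :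
        (x - s) ^ 2 * w x = s * s * w x + -2 * s * (x * w x) + x ^ 2 * w x := by ring
    simp only [h_split]
    rw [intervalIntegral.integral_add (h_int (by fun_prop)) (h_int (by fun_prop)),
      intervalIntegral.integral_add (h_int (by fun_prop)) (h_int (by fun_prop)),
      intervalIntegral.integral_const_mul, intervalIntegral.integral_const_mul]
    ring
  have h_pos (s : ℝ) : 0 < ∫ x in a..b, (x - s) ^ 2 * w x := by
    obtain ⟨x, hx, hxs⟩ : ∃ x ∈ Set.Icc a b, x ≠ s := (Set.Icc_infinite hab).nontrivial.exists_ne s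
    exact intervalIntegral.integral_pos hab (by fun_prop)
      (fun y hy ↦ mul_nonneg (sq_nonneg _) (hpos y (Set.Ioc_subset_Icc_self hy)).le)
      ⟨x, hx, mul_pos (sq_pos_of_ne_zero (sub_ne_zero.2 hxs)) (hpos x hx)⟩
  have h_discrim := discrim_lt_zero h_mass.ne' fun s ↦ h_expand s ▸ h_pos s
  rw [discrim] at h_discrim
  linarith

/-- The mean over the interval from `a` to `b` of `u ^ k / (u ^ 2 + c ^ 2) ^ n`. With `c = Dc`,
`a = -L - Ds` and `b = L - Ds`, the quantities `ψ₂`, `ψ₄`, `ψ₆`, `ψ̄₅` are the means for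
`(k, n) = (0, 1), (0, 2), (0, 3), (1, 3)`. -/
noncomputable def lorentzianMean (c a b : ℝ) (k n : ℕ) : ℝ :=
  ⨍ u in a..b, u ^ k * ((u ^ 2 + c ^ 2) ^ n)⁻¹

section LorentzianMean

variable {a b c : ℝ}

lemma mul_integral_sub_eq_lorentzianMean (c d L : ℝ) (k n : ℕ) :
    1 / (2 * L) * ∫ x in (-L)..L, (x - d) ^ k * (((x - d) ^ 2 + c ^ 2) ^ n)⁻¹ =
      lorentzianMean c (-L - d) (L - d) k n := by
  rw [lorentzianMean, interval_average_eq_div,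
    intervalIntegral.integral_comp_sub_right (fun u ↦ u ^ k * ((u ^ 2 + c ^ 2) ^ n)⁻¹) d]
  ring

lemma continuous_pow_mul_inv_sq_add_sq_pow (hc : c ≠ 0) (k n : ℕ) :
    Continuous fun u : ℝ ↦ u ^ k * ((u ^ 2 + c ^ 2) ^ n)⁻¹ := by
  have h_ne (u : ℝ) : (u ^ 2 + c ^ 2) ^ n ≠ 0 := by positivity
  fun_prop (disch := exact h_ne _)

lemma intervalIntegrable_pow_mul_inv_sq_add_sq_pow (hc : c ≠ 0) (a b : ℝ) (k n : ℕ) :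
    IntervalIntegrable (fun u : ℝ ↦ u ^ k * ((u ^ 2 + c ^ 2) ^ n)⁻¹) MeasureTheory.volume a b :=
  (continuous_pow_mul_inv_sq_add_sq_pow hc k n).intervalIntegrable a b

lemma hasDerivAt_inv_sq_add_sq_pow (hc : c ≠ 0) (n : ℕ) (u : ℝ) :
    HasDerivAt (fun u : ℝ ↦ ((u ^ 2 + c ^ 2) ^ n)⁻¹)
      (-(2 * n) * (u * ((u ^ 2 + c ^ 2) ^ (n + 1))⁻¹)) u := by
  have h_q : 0 < u ^ 2 + c ^ 2 := by positivity
  refine ((((hasDerivAt_pow 2 u).add_const (c ^ 2)).fun_pow n).fun_inv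
    (pow_pos h_q n).ne').congr_deriv ?_
  cases n with
  | zero => simp
  | succ n =>
    push_cast
    field_simp
    rw [neg_inj]
    ring

lemma lorentzianMean_add_two_add_sq_mul (hc : c ≠ 0) (a b : ℝ) (k n : ℕ) :
    lorentzianMean c a b (k + 2) (n + 1) + c ^ 2 * lorentzianMean c a b k (n + 1) =
      lorentzianMean c a b k n := by
  have h_int := intervalIntegrable_pow_mul_inv_sq_add_sq_pow hc a b
  simp only [lorentzianMean, interval_average_eq_div]
  rw [← mul_div_assoc, ← add_div, ← intervalIntegral.integral_const_mul,
    ← intervalIntegral.integral_add (h_int _ _) ((h_int _ _).const_mul _)]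
  congr 1
  refine intervalIntegral.integral_congr fun u _ ↦ ?_
  have h_ne : u ^ 2 + c ^ 2 ≠ 0 := by positivity
  field_simp [h_ne]
  ring

-- The truncated `k - 1` does no harm at `k = 0`, where its coefficient `k` vanishes.
lemma lorentzianMean_integration_by_parts (hc : c ≠ 0) (a b : ℝ) (k n : ℕ) :
    k * lorentzianMean c a b (k - 1) n - 2 * n * lorentzianMean c a b (k + 1) (n + 1) =
      (b ^ k * ((b ^ 2 + c ^ 2) ^ n)⁻¹ - a ^ k * ((a ^ 2 + c ^ 2) ^ n)⁻¹) / (b - a) := by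
  have h_int := intervalIntegrable_pow_mul_inv_sq_add_sq_pow hc a b
  have h_deriv (u : ℝ) : HasDerivAt (fun u : ℝ ↦ u ^ k * ((u ^ 2 + c ^ 2) ^ n)⁻¹)
      (k * (u ^ (k - 1) * ((u ^ 2 + c ^ 2) ^ n)⁻¹) -
        2 * n * (u ^ (k + 1) * ((u ^ 2 + c ^ 2) ^ (n + 1))⁻¹)) u :=
    ((hasDerivAt_pow k u).fun_mul (hasDerivAt_inv_sq_add_sq_pow hc n u)).congr_deriv (by ring)
  have h_ftc := intervalIntegral.integral_eq_sub_of_hasDerivAt (fun u _ ↦ h_deriv u)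
    (((h_int _ _).const_mul _).sub ((h_int _ _).const_mul _))
  rw [intervalIntegral.integral_sub ((h_int _ _).const_mul _) ((h_int _ _).const_mul _),
    intervalIntegral.integral_const_mul, intervalIntegral.integral_const_mul] at h_ftc
  simp only [lorentzianMean, interval_average_eq_div]
  rw [← h_ftc]
  ring

lemma lorentzianMean_zero_pos (hc : c ≠ 0) (hab : a < b) (n : ℕ) :
    0 < lorentzianMean c a b 0 n := by
  rw [lorentzianMean, interval_average_eq_div]
  exact div_pos (intervalIntegral.intervalIntegral_pos_of_pos
    (intervalIntegrable_pow_mul_inv_sq_add_sq_pow hc a b 0 n) (fun _ ↦ by positivity) hab)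
    (sub_pos.2 hab)

lemma lorentzianMean_nonneg_of_even (hab : a ≤ b) {k : ℕ} (hk : Even k) (n : ℕ) :
    0 ≤ lorentzianMean c a b k n := by
  rw [lorentzianMean, interval_average_eq_div]
  exact div_nonneg (intervalIntegral.integral_nonneg hab fun u _ ↦
    mul_nonneg (hk.pow_nonneg u) (by positivity)) (sub_nonneg.2 hab)

lemma sq_mul_lorentzianMean_succ_le (hc : c ≠ 0) (hab : a ≤ b) {k : ℕ} (hk : Even k) (n : ℕ) :
    c ^ 2 * lorentzianMean c a b k (n + 1) ≤ lorentzianMean c a b k n := by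
  linarith [lorentzianMean_add_two_add_sq_mul hc a b k n,
    lorentzianMean_nonneg_of_even (c := c) hab (hk.add even_two) (n + 1)]

lemma sq_lorentzianMean_one_lt (hc : c ≠ 0) (hab : a < b) (n : ℕ) :
    lorentzianMean c a b 1 n ^ 2 < lorentzianMean c a b 0 n * lorentzianMean c a b 2 n := by
  have hw : Continuous fun u : ℝ ↦ ((u ^ 2 + c ^ 2) ^ n)⁻¹ := by
    simpa only [pow_zero, one_mul] using continuous_pow_mul_inv_sq_add_sq_pow hc 0 n
  have h_cs := sq_integral_mul_lt_integral_mul_integral_sq_mul hab hw.continuousOn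
    fun _ _ ↦ by positivity
  simp only [lorentzianMean, interval_average_eq_div, pow_zero, pow_one, one_mul]
  rw [div_pow, div_mul_div_comm, ← sq]
  exact div_lt_div_of_pos_right h_cs (pow_pos (sub_pos.2 hab) 2)

lemma eq_neg_of_lorentzianMean_one_eq_zero (hc : c ≠ 0) (hab : a < b) {n : ℕ} (hn : n ≠ 0)
    (h : lorentzianMean c a b 1 (n + 1) = 0) : a = -b := by
  have h_parts := lorentzianMean_integration_by_parts hc a b 0 n
  have h_endpoints : ((b ^ 2 + c ^ 2) ^ n)⁻¹ = ((a ^ 2 + c ^ 2) ^ n)⁻¹ := by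
    rw [h, Nat.cast_zero, zero_mul, mul_zero, sub_zero,
      eq_div_iff (sub_ne_zero.2 hab.ne')] at h_parts
    linarith
  have h_sq : a ^ 2 + c ^ 2 = b ^ 2 + c ^ 2 :=
    (pow_left_inj₀ (by positivity) (by positivity) hn).1 (inv_injective h_endpoints.symm)
  exact (sq_eq_sq_iff_eq_or_eq_neg.1 (add_right_cancel h_sq)).resolve_left hab.ne

lemma lorentzianMean_zero_lt_of_symmetric (hc : c ≠ 0) (hb : 0 < b) (n : ℕ) :
    (2 * n - 1) * lorentzianMean c (-b) b 0 n <
      2 * n * c ^ 2 * lorentzianMean c (-b) b 0 (n + 1) := by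
  have h_parts := lorentzianMean_integration_by_parts hc (-b) b 1 n
  have h_two := lorentzianMean_add_two_add_sq_mul hc (-b) b 0 n
  have h_boundary :
      (b ^ 1 * ((b ^ 2 + c ^ 2) ^ n)⁻¹ - (-b) ^ 1 * (((-b) ^ 2 + c ^ 2) ^ n)⁻¹) / (b - -b) =
        ((b ^ 2 + c ^ 2) ^ n)⁻¹ := by
    rw [neg_sq]
    field_simp
  have h_pos : 0 < ((b ^ 2 + c ^ 2) ^ n)⁻¹ := by positivity
  rw [h_boundary] at h_parts
  simp only [Nat.cast_one, one_mul, Nat.sub_self, Nat.reduceAdd, zero_add] at h_parts h_two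
  linear_combination h_pos - h_parts - 2 * n * h_two

lemma lorentzianMean_discrim_pos (hc : c ≠ 0) (hab : a < b) :
    0 < (lorentzianMean c a b 0 2 - 2 * c ^ 2 * lorentzianMean c a b 0 3) ^ 2 +
      4 * c ^ 2 * lorentzianMean c a b 1 3 ^ 2 := by
  by_cases h_odd : lorentzianMean c a b 1 3 = 0
  · obtain rfl := eq_neg_of_lorentzianMean_one_eq_zero hc hab two_ne_zero h_odd
    have h_diag :
        lorentzianMean c (-b) b 0 2 - 2 * c ^ 2 * lorentzianMean c (-b) b 0 3 < 0 := by
      have h_lt := lorentzianMean_zero_lt_of_symmetric hc (by linarith : 0 < b) 2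
      have h_pos := lorentzianMean_zero_pos hc hab 2
      norm_num only at h_lt
      linarith
    have h_ne := h_diag.ne
    positivity
  · positivity

lemma sqrt_lorentzianMean_discrim_lt (hc : c ≠ 0) (hab : a < b) :
    √((lorentzianMean c a b 0 2 - 2 * c ^ 2 * lorentzianMean c a b 0 3) ^ 2 +
      4 * c ^ 2 * lorentzianMean c a b 1 3 ^ 2) < lorentzianMean c a b 0 2 := by
  rw [sqrt_lt' (lorentzianMean_zero_pos hc hab 2)]
  have h_two := lorentzianMean_add_two_add_sq_mul hc a b 0 2
  have h_cs := mul_lt_mul_of_pos_left (sq_lorentzianMean_one_lt hc hab 3)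
    (by positivity : 0 < 4 * c ^ 2)
  simp only [Nat.reduceAdd] at h_two
  linear_combination h_cs + 4 * c ^ 2 * lorentzianMean c a b 0 3 * h_two

end LorentzianMean

theorem charpoly_W2x3 (L D θ : ℝ) (hL : 0 < L) (hD : 0 < D)
    (hθ : θ ∈ Set.Ioo (-(π / 2)) (π / 2))
    (Ds Dc ψ₂ ψ₄ ψ₆ ψ₅' γ₁ γ₂ γ₃ : ℝ)
    (hDs : Ds = D * sin θ) (hDc : Dc = D * cos θ)
    (hψ₂ : ψ₂ = (1 / (2 * L)) * ∫ x in (-L)..L, ((x - Ds) ^ 2 + Dc ^ 2)⁻¹)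
    (hψ₄ : ψ₄ = (1 / (2 * L)) * ∫ x in (-L)..L, (((x - Ds) ^ 2 + Dc ^ 2) ^ 2)⁻¹)
    (hψ₆ : ψ₆ = (1 / (2 * L)) * ∫ x in (-L)..L, (((x - Ds) ^ 2 + Dc ^ 2) ^ 3)⁻¹)
    (hψ₅' : ψ₅' = (1 / (2 * L)) * ∫ x in (-L)..L, (x - Ds) * (((x - Ds) ^ 2 + Dc ^ 2) ^ 3)⁻¹)
    (hγ₁ : γ₁ = ψ₂)
    (hγ₂ : γ₂ = (Dc ^ 2 / 2) *
      (ψ₄ + Real.sqrt ((ψ₄ - 2 * Dc ^ 2 * ψ₆) ^ 2 + 4 * Dc ^ 2 * ψ₅' ^ 2)))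
    (hγ₃ : γ₃ = (Dc ^ 2 / 2) *
      (ψ₄ - Real.sqrt ((ψ₄ - 2 * Dc ^ 2 * ψ₆) ^ 2 + 4 * Dc ^ 2 * ψ₅' ^ 2)))
    (W : Matrix (Fin 3) (Fin 3) ℝ)
    (hW : W = !![ψ₂, 0, 0; 0, Dc ^ 4 * ψ₆, Dc ^ 3 * ψ₅';
                 0, Dc ^ 3 * ψ₅', Dc ^ 2 * ψ₄ - Dc ^ 4 * ψ₆]) :
    W.charpoly = (X - C γ₁) * (X - C γ₂) * (X - C γ₃) ∧
      γ₁ > γ₂ ∧ γ₂ > γ₃ ∧ γ₃ > 0 := by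
  have hc : 0 < Dc := hDc ▸ mul_pos hD (cos_pos_of_mem_Ioo hθ)
  have hab : -L - Ds < L - Ds := by linarith
  have h_mean := mul_integral_sub_eq_lorentzianMean Dc Ds L
  replace hψ₂ := hψ₂.trans (by simpa only [pow_zero, pow_one, one_mul] using h_mean 0 1)
  replace hψ₄ := hψ₄.trans (by simpa only [pow_zero, one_mul] using h_mean 0 2)
  replace hψ₆ := hψ₆.trans (by simpa only [pow_zero, one_mul] using h_mean 0 3)
  replace hψ₅' := hψ₅'.trans (by simpa only [pow_one] using h_mean 1 3)
  have h_trace : Dc ^ 2 * ψ₄ ≤ ψ₂ := by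
    simpa only [hψ₂, hψ₄] using sq_mul_lorentzianMean_succ_le hc.ne' hab.le Even.zero 1
  have h_discrim := lorentzianMean_discrim_pos hc.ne' hab
  have h_lt := sqrt_lorentzianMean_discrim_lt hc.ne' hab
  rw [← hψ₄, ← hψ₆, ← hψ₅'] at h_discrim h_lt
  have h_sq := sq_sqrt h_discrim.le
  have h_gap := mul_pos (pow_pos hc 2) (sqrt_pos.2 h_discrim)
  have h_gap_lt := mul_lt_mul_of_pos_left h_lt (pow_pos hc 2)
  refine ⟨?_, by linarith, by linarith, by linarith⟩
  rw [hW, charpoly_fin_three_of_block, hγ₁, mul_assoc,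
    charpoly_fin_two_eq_mul (x := γ₂) (y := γ₃) (by rw [hγ₂, hγ₃]; ring)
      (by rw [hγ₂, hγ₃]; linear_combination Dc ^ 4 / 4 * h_sq)]
end

section
/- Fix real numbers L > 0, D > 0 and an angle θ ∈ (−π/2, π/2). Then D_c²·ψ₆·(ψ₄ − D_c²·ψ₆) > D_c²·ψ̄₅². (Equivalently, the 2×2 real symmetric matrix (1/(2L)) ∫_{−L}^{L} r(x) r(x)ᵀ / ‖r(x)‖⁶ dx with r(x) = (D_c, x − D_s)ᵀ, whose entries are D_c² ψ₆, D_c ψ̄₅ and ψ₄ − D_c² ψ₆, is positive definite, so its determinant is positive.) -/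
open Real

/-!
Write `c = Dc`, `s = Ds` and `r(x) = (c, x - s)`. The numbers `c² ψ₆`, `c ψ₅'` and `ψ₄ - c² ψ₆` are,
up to the factor `1 / (2L)`, the entries of the Gram matrix of the two coordinates of `r` for the
weight `‖r‖⁻⁶`; for the last one this uses `(x - s)² = ‖r‖² - c²`. The quadratic form of this matrix
at `v` is `∫ ‖r(x)‖⁻⁶ (v ⬝ r(x))² dx`, which is positive for `v ≠ 0` because the coordinates of `r`
are linearly independent functions on the interval when `c ≠ 0`. So the determinant is positive.
-/

open Set Matrix MeasureTheory intervalIntegral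

section WeightedGram

variable {ι : Type*} {a b : ℝ} {w : ℝ → ℝ} {f : ι → ℝ → ℝ}

/-- The Gram matrix of the functions `f i` for the inner product
`(g, h) ↦ ∫ x in a..b, w x * (g x * h x)`, that is, the integral of `w(x) f(x) f(x)ᵀ`. -/
noncomputable def weightedGram (w : ℝ → ℝ) (f : ι → ℝ → ℝ) (a b : ℝ) : Matrix ι ι ℝ :=
  of fun i j => ∫ x in a..b, w x * (f i x * f j x)

theorem isHermitian_weightedGram : (weightedGram w f a b).IsHermitian := by
  ext i j
  simp only [weightedGram, conjTranspose_apply, of_apply, star_trivial, mul_comm]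

theorem dotProduct_weightedGram_mulVec [Fintype ι] (hw : ContinuousOn w (uIcc a b))
    (hf : ∀ i, ContinuousOn (f i) (uIcc a b)) (v : ι → ℝ) :
    v ⬝ᵥ weightedGram w f a b *ᵥ v = ∫ x in a..b, w x * (∑ i, v i * f i x) ^ 2 := by
  have expand_sq (x : ℝ) : w x * (∑ i, v i * f i x) ^ 2 =
      ∑ i, ∑ j, v i * (w x * (f i x * f j x) * v j) := by
    rw [sq, Finset.sum_mul_sum, Finset.mul_sum]
    simp_rw [Finset.mul_sum]
    exact Finset.sum_congr rfl fun i _ => Finset.sum_congr rfl fun j _ => by ring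
  have integrable_term (i j : ι) :
      IntervalIntegrable (fun x => v i * (w x * (f i x * f j x) * v j)) volume a b :=
    ((hw.mul ((hf i).mul (hf j))).intervalIntegrable.mul_const _).const_mul _
  simp_rw [expand_sq]
  rw [integral_finsetSum fun i _ => by
    simpa only [Finset.sum_fn] using IntervalIntegrable.sum _ fun j _ => integrable_term i j]
  simp_rw [integral_finsetSum fun j _ => integrable_term _ j]
  simp only [intervalIntegral.integral_const_mul, intervalIntegral.integral_mul_const, mulVec,
    dotProduct, Finset.mul_sum, weightedGram, of_apply]

theorem posDef_weightedGram [Finite ι] (hab : a < b) (hw : ContinuousOn w (Icc a b))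
    (hw_pos : ∀ x ∈ Icc a b, 0 < w x) (hf : ∀ i, ContinuousOn (f i) (Icc a b))
    (hf_indep : LinearIndependent ℝ fun i => (Icc a b).domRestrict (f i)) :
    (weightedGram w f a b).PosDef := by
  cases nonempty_fintype ι
  refine .of_dotProduct_mulVec_pos isHermitian_weightedGram fun v hv => ?_
  obtain ⟨x, hx, hvx⟩ : ∃ x ∈ Icc a b, ∑ i, v i * f i x ≠ 0 := by
    by_contra! h
    refine hv (funext (Fintype.linearIndependent_iff.1 hf_indep v (funext fun x => ?_)))
    simpa [domRestrict_apply] using h x x.2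
  rw [star_trivial, dotProduct_weightedGram_mulVec (by rwa [uIcc_of_le hab.le])
    (by rwa [uIcc_of_le hab.le])]
  exact integral_pos hab (by fun_prop)
    (fun y hy => mul_nonneg (hw_pos y (Ioc_subset_Icc_self hy)).le (sq_nonneg _))
    ⟨x, hx, mul_pos (hw_pos x hx) (sq_pos_of_ne_zero hvx)⟩

end WeightedGram

section Displacement

variable {a b c : ℝ}

/-- The coordinates of the vector `r(x) = (c, x - s)` of the paper, as functions of `x`;
the matrix of the theorem is their Gram matrix for the weight `‖r‖⁻⁶`. -/
def displacement (c s : ℝ) : Fin 2 → ℝ → ℝ :=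
  ![fun _ => c, fun x => x - s]

theorem continuous_displacement (c s : ℝ) (i : Fin 2) : Continuous (displacement c s i) := by
  fin_cases i
  · exact continuous_const
  · exact continuous_sub_right s

theorem linearIndependent_displacement (hab : a < b) (hc : c ≠ 0) (s : ℝ) :
    LinearIndependent ℝ fun i => (Icc a b).domRestrict (displacement c s i) := by
  rw [Fintype.linearIndependent_iff]
  intro v hv
  have vanish (x : ℝ) (hx : x ∈ Icc a b) : v 0 * c + v 1 * (x - s) = 0 := by
    simpa [displacement, domRestrict_apply, Fin.sum_univ_two] using congrFun hv ⟨x, hx⟩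
  have vanish_left := vanish a (left_mem_Icc.2 hab.le)
  have hv₁ : v 1 = 0 := by
    have : v 1 * (b - a) = 0 := by
      linear_combination vanish b (right_mem_Icc.2 hab.le) - vanish_left
    exact (mul_eq_zero.1 this).resolve_right (sub_pos.2 hab).ne'
  have hv₀ : v 0 = 0 := by simpa [hv₁, hc] using vanish_left
  exact Fin.forall_fin_two.2 ⟨hv₀, hv₁⟩

theorem continuous_inv_sq_add_sq_pow (hc : c ≠ 0) (s : ℝ) (n : ℕ) :
    Continuous fun x : ℝ => (((x - s) ^ 2 + c ^ 2) ^ n)⁻¹ :=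
  Continuous.inv₀ (by fun_prop) fun _ => by positivity

theorem integral_sq_mul_inv_sq_add_sq_pow_succ (hc : c ≠ 0) (s : ℝ) (n : ℕ) :
    ∫ x in a..b, (x - s) ^ 2 * (((x - s) ^ 2 + c ^ 2) ^ (n + 1))⁻¹ =
      (∫ x in a..b, (((x - s) ^ 2 + c ^ 2) ^ n)⁻¹) -
        c ^ 2 * ∫ x in a..b, (((x - s) ^ 2 + c ^ 2) ^ (n + 1))⁻¹ := by
  rw [← intervalIntegral.integral_const_mul, ← intervalIntegral.integral_sub
    ((continuous_inv_sq_add_sq_pow hc s n).intervalIntegrable _ _)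
    (((continuous_inv_sq_add_sq_pow hc s (n + 1)).intervalIntegrable _ _).const_mul _)]
  refine integral_congr fun x _ => ?_
  have : (x - s) ^ 2 + c ^ 2 ≠ 0 := by positivity
  field_simp
  ring

theorem weightedGram_displacement (hc : c ≠ 0) (s : ℝ) (n : ℕ) :
    weightedGram (fun x => (((x - s) ^ 2 + c ^ 2) ^ (n + 1))⁻¹) (displacement c s) a b =
      !![c ^ 2 * ∫ x in a..b, (((x - s) ^ 2 + c ^ 2) ^ (n + 1))⁻¹,
          c * ∫ x in a..b, (x - s) * (((x - s) ^ 2 + c ^ 2) ^ (n + 1))⁻¹;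
        c * ∫ x in a..b, (x - s) * (((x - s) ^ 2 + c ^ 2) ^ (n + 1))⁻¹,
          (∫ x in a..b, (((x - s) ^ 2 + c ^ 2) ^ n)⁻¹) -
            c ^ 2 * ∫ x in a..b, (((x - s) ^ 2 + c ^ 2) ^ (n + 1))⁻¹] := by
  rw [← integral_sq_mul_inv_sq_add_sq_pow_succ hc, ← intervalIntegral.integral_const_mul,
    ← intervalIntegral.integral_const_mul]
  ext i j
  fin_cases i <;> fin_cases j <;> refine integral_congr fun x _ => ?_ <;>
    simp [displacement] <;> ring

theorem posDef_weightedGram_displacement (hab : a < b) (hc : c ≠ 0) (s : ℝ) (n : ℕ) :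
    (weightedGram (fun x => (((x - s) ^ 2 + c ^ 2) ^ n)⁻¹) (displacement c s) a b).PosDef :=
  posDef_weightedGram hab (continuous_inv_sq_add_sq_pow hc s n).continuousOn
    (fun _ _ => by positivity) (fun i => (continuous_displacement c s i).continuousOn)
    (linearIndependent_displacement hab hc s)

end Displacement

theorem det_positive_2x2 (L D θ : ℝ) (hL : 0 < L) (hD : 0 < D)
    (hθ : θ ∈ Set.Ioo (-(π / 2)) (π / 2))
    (Ds Dc ψ₄ ψ₆ ψ₅' : ℝ)
    (hDs : Ds = D * sin θ) (hDc : Dc = D * cos θ)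
    (hψ₄ : ψ₄ = (1 / (2 * L)) * ∫ x in (-L)..L, (((x - Ds) ^ 2 + Dc ^ 2) ^ 2)⁻¹)
    (hψ₆ : ψ₆ = (1 / (2 * L)) * ∫ x in (-L)..L, (((x - Ds) ^ 2 + Dc ^ 2) ^ 3)⁻¹)
    (hψ₅' : ψ₅' = (1 / (2 * L)) * ∫ x in (-L)..L, (x - Ds) * (((x - Ds) ^ 2 + Dc ^ 2) ^ 3)⁻¹) :
    Dc ^ 2 * ψ₆ * (ψ₄ - Dc ^ 2 * ψ₆) > Dc ^ 2 * ψ₅' ^ 2 := by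
  have hc : Dc ≠ 0 := hDc ▸ (mul_pos hD (cos_pos_of_mem_Ioo hθ)).ne'
  have det_pos := (posDef_weightedGram_displacement (neg_lt_self hL) hc Ds 3).det_pos
  rw [weightedGram_displacement hc, det_fin_two_of] at det_pos
  have scaled_det_pos := mul_pos (show 0 < (1 / (2 * L)) ^ 2 by positivity) det_pos
  rw [hψ₄, hψ₆, hψ₅']
  linear_combination scaled_det_pos
end

section
/- Fix real numbers L > 0, D > 0 and an angle θ ∈ (−π/2, π/2). Then (1/2)·√((ψ₄ − 2 D_c² ψ₆)² + 4 D_c² ψ̄₅²) < ψ₄; equivalently, D_c² ψ̄₅² < (3/4)·ψ₄² + (ψ₄ − D_c² ψ₆)·D_c² ψ₆. -/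
open Real

/-!
With `t = x - Ds` and `ρ = t ^ 2 + Dc ^ 2`, the quantity under the square root is the squared
modulus of the mean of `(t + i Dc) ^ 2 / ρ ^ 3`, whose real part is `1 / ρ ^ 2 - 2 Dc ^ 2 / ρ ^ 3`
and whose imaginary part is `2 Dc t / ρ ^ 3`. Since `|t + i Dc| ^ 2 = ρ`, the modulus of the
integrand is `1 / ρ ^ 2`, and the triangle inequality for integrals bounds the square root by `ψ₄`
itself.
-/

open MeasureTheory

theorem sqrt_sq_integral_add_sq_integral_le {α : Type*} [MeasurableSpace α] {μ : Measure α}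
    {f g : α → ℝ} (hf : Integrable f μ) (hg : Integrable g μ) :
    √((∫ x, f x ∂μ) ^ 2 + (∫ x, g x ∂μ) ^ 2) ≤ ∫ x, √(f x ^ 2 + g x ^ 2) ∂μ := by
  have integral_eq : ∫ x, ((f x : ℂ) + g x * Complex.I) ∂μ
      = ((∫ x, f x ∂μ : ℝ) : ℂ) + ((∫ x, g x ∂μ : ℝ) : ℂ) * Complex.I := by
    rw [integral_add hf.ofReal (hg.ofReal.mul_const _), integral_mul_const,
      integral_complex_ofReal, integral_complex_ofReal]
  simpa only [integral_eq, Complex.norm_add_mul_I] using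
    norm_integral_le_integral_norm (μ := μ) fun x ↦ (f x : ℂ) + g x * Complex.I

theorem sqrt_sq_add_sq_eq_inv_sq {t c : ℝ} (hc : c ≠ 0) :
    √((((t ^ 2 + c ^ 2) ^ 2)⁻¹ - 2 * c ^ 2 * ((t ^ 2 + c ^ 2) ^ 3)⁻¹) ^ 2
      + (2 * c * (t * ((t ^ 2 + c ^ 2) ^ 3)⁻¹)) ^ 2) = ((t ^ 2 + c ^ 2) ^ 2)⁻¹ := by
  rw [Real.sqrt_eq_iff_eq_sq (by positivity) (by positivity)]
  field_simp
  ring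

section InvSqAddSqPow

variable {μ : Measure ℝ} {s c : ℝ} {n : ℕ}

theorem integrable_inv_sq_add_sq_pow [IsFiniteMeasure μ] (hc : c ≠ 0) :
    Integrable (fun x ↦ (((x - s) ^ 2 + c ^ 2) ^ n)⁻¹) μ := by
  refine .of_bound (by fun_prop) ((c ^ 2) ^ n)⁻¹ (.of_forall fun x ↦ ?_)
  rw [Real.norm_of_nonneg (by positivity)]
  gcongr
  exact le_add_of_nonneg_left (sq_nonneg _)

theorem integrable_inv_sq_add_sq_pow_succ (hc : c ≠ 0)
    (h : Integrable (fun x ↦ (((x - s) ^ 2 + c ^ 2) ^ n)⁻¹) μ) :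
    Integrable (fun x ↦ (((x - s) ^ 2 + c ^ 2) ^ (n + 1))⁻¹) μ := by
  refine (h.mul_const (c ^ 2)⁻¹).mono' (by fun_prop) (.of_forall fun x ↦ ?_)
  rw [Real.norm_of_nonneg (by positivity), pow_succ, mul_inv]
  gcongr
  exact le_add_of_nonneg_left (sq_nonneg _)

theorem integrable_sub_mul_inv_sq_add_sq_pow_succ (hc : c ≠ 0)
    (h : Integrable (fun x ↦ (((x - s) ^ 2 + c ^ 2) ^ n)⁻¹) μ) :
    Integrable (fun x ↦ (x - s) * (((x - s) ^ 2 + c ^ 2) ^ (n + 1))⁻¹) μ := by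
  refine (h.mul_const (2 * |c|)⁻¹).mono' (by fun_prop) (.of_forall fun x ↦ ?_)
  have hρ : 0 < (x - s) ^ 2 + c ^ 2 := by positivity
  have am_gm : 2 * |x - s| * |c| ≤ (x - s) ^ 2 + c ^ 2 := by
    simpa only [sq_abs] using two_mul_le_add_sq |x - s| |c|
  have ratio_le : |x - s| * ((x - s) ^ 2 + c ^ 2)⁻¹ ≤ (2 * |c|)⁻¹ := by
    field_simp
    linarith
  rw [norm_mul, Real.norm_eq_abs, Real.norm_of_nonneg (by positivity), pow_succ, mul_inv,
    mul_left_comm]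
  gcongr

theorem integral_inv_sq_add_sq_pow_pos [NeZero μ] (hc : c ≠ 0)
    (h : Integrable (fun x ↦ (((x - s) ^ 2 + c ^ 2) ^ n)⁻¹) μ) :
    0 < ∫ x, (((x - s) ^ 2 + c ^ 2) ^ n)⁻¹ ∂μ := by
  have hpos (x : ℝ) : 0 < (((x - s) ^ 2 + c ^ 2) ^ n)⁻¹ := by positivity
  rw [integral_pos_iff_support_of_nonneg (fun x ↦ (hpos x).le) h,
    Function.support_eq_univ fun x ↦ (hpos x).ne']
  exact NeZero.pos (μ Set.univ)

end InvSqAddSqPow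

theorem sqrt_lt_psi4_general {μ : Measure ℝ} [NeZero μ] {s c ψ₄ ψ₆ ψ₅' : ℝ} (hc : c ≠ 0)
    (hint : Integrable (fun x ↦ (((x - s) ^ 2 + c ^ 2) ^ 2)⁻¹) μ)
    (hψ₄ : ψ₄ = ∫ x, (((x - s) ^ 2 + c ^ 2) ^ 2)⁻¹ ∂μ)
    (hψ₆ : ψ₆ = ∫ x, (((x - s) ^ 2 + c ^ 2) ^ 3)⁻¹ ∂μ)
    (hψ₅' : ψ₅' = ∫ x, (x - s) * (((x - s) ^ 2 + c ^ 2) ^ 3)⁻¹ ∂μ) :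
    0 < ψ₄ ∧ √((ψ₄ - 2 * c ^ 2 * ψ₆) ^ 2 + 4 * c ^ 2 * ψ₅' ^ 2) ≤ ψ₄ ∧
      c ^ 2 * ψ₅' ^ 2 ≤ (ψ₄ - c ^ 2 * ψ₆) * (c ^ 2 * ψ₆) := by
  have hpos : 0 < ψ₄ := hψ₄ ▸ integral_inv_sq_add_sq_pow_pos hc hint
  have hint₆ := (integrable_inv_sq_add_sq_pow_succ hc hint).const_mul (2 * c ^ 2)
  have hint₅ := (integrable_sub_mul_inv_sq_add_sq_pow_succ hc hint).const_mul (2 * c)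
  have hsqrt : √((ψ₄ - 2 * c ^ 2 * ψ₆) ^ 2 + (2 * c * ψ₅') ^ 2) ≤ ψ₄ := by
    simpa only [Pi.sub_apply, Nat.reduceAdd, sqrt_sq_add_sq_eq_inv_sq hc,
      integral_sub hint hint₆, integral_const_mul, ← hψ₄, ← hψ₆, ← hψ₅']
      using sqrt_sq_integral_add_sq_integral_le (hint.sub hint₆) hint₅
  have hsq := (Real.sqrt_le_left hpos.le).1 hsqrt
  refine ⟨hpos, ?_, by linarith⟩
  convert hsqrt using 3
  ring

theorem one_div_mul_intervalIntegral_eq_setAverage {L : ℝ} (hL : 0 ≤ L) (f : ℝ → ℝ) :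
    (1 / (2 * L)) * ∫ x in (-L)..L, f x = ⨍ x in Set.Ioc (-L) L, f x := by
  rw [← Set.uIoc_of_le (neg_le_self hL), interval_average_eq_div]
  ring

theorem sqrt_lt_psi4 (L D θ : ℝ) (hL : 0 < L) (hD : 0 < D)
    (hθ : θ ∈ Set.Ioo (-(π / 2)) (π / 2))
    (Ds Dc ψ₄ ψ₆ ψ₅' : ℝ)
    (hDs : Ds = D * sin θ) (hDc : Dc = D * cos θ)
    (hψ₄ : ψ₄ = (1 / (2 * L)) * ∫ x in (-L)..L, (((x - Ds) ^ 2 + Dc ^ 2) ^ 2)⁻¹)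
    (hψ₆ : ψ₆ = (1 / (2 * L)) * ∫ x in (-L)..L, (((x - Ds) ^ 2 + Dc ^ 2) ^ 3)⁻¹)
    (hψ₅' : ψ₅' = (1 / (2 * L)) * ∫ x in (-L)..L, (x - Ds) * (((x - Ds) ^ 2 + Dc ^ 2) ^ 3)⁻¹) :
    (1 / 2) * Real.sqrt ((ψ₄ - 2 * Dc ^ 2 * ψ₆) ^ 2 + 4 * Dc ^ 2 * ψ₅' ^ 2) < ψ₄ ∧
      Dc ^ 2 * ψ₅' ^ 2 < (3 / 4) * ψ₄ ^ 2 + (ψ₄ - Dc ^ 2 * ψ₆) * (Dc ^ 2 * ψ₆) := by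
  have hc : Dc ≠ 0 := hDc ▸ (mul_pos hD (cos_pos_of_mem_Ioo hθ)).ne'
  have : NeZero (volume.restrict (Set.Ioc (-L) L)) := ⟨by simp [hL]⟩
  rw [one_div_mul_intervalIntegral_eq_setAverage hL.le] at hψ₄ hψ₆ hψ₅'
  obtain ⟨hpos, hsqrt, hsq⟩ :=
    sqrt_lt_psi4_general hc (integrable_inv_sq_add_sq_pow hc) hψ₄ hψ₆ hψ₅'
  exact ⟨by linarith, by linarith [pow_pos hpos 2]⟩
end

section
/- Let n ≥ 1, let γ : Fin n → ℝ satisfy γ i > 0 for all i, let c > 0 and P > 0 be real numbers. Then there exists a unique τ > 0 such that ∑_{i} max(τ − c/γ i, 0) = P. -/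
/-!
The total power `∑ i, (τ - a i)⁺` is continuous in `τ`, vanishes below all the levels `a i`,
dominates each `τ - a i`, and is strictly increasing as soon as it is positive. The intermediate
value theorem gives a water level for every positive budget, and strict monotonicity makes it
unique.
-/

section LinearOrderedGroup

variable {ι G : Type*} [Fintype ι] [AddCommGroup G] [LinearOrder G]

/-- The total power `∑ i, (τ - a i)⁺` that water-filling up to the water level `τ` allocates to
channels with noise levels `a`; a channel of eigenvalue `γ i` has noise level `a i = c / γ i`. -/
def waterfillingPower (a : ι → G) (τ : G) : G :=
  ∑ i, max (τ - a i) 0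

theorem continuous_waterfillingPower [IsOrderedAddMonoid G] [TopologicalSpace G] [OrderTopology G]
    (a : ι → G) : Continuous (waterfillingPower a) := by
  unfold waterfillingPower
  fun_prop

variable [IsOrderedAddMonoid G] {a : ι → G} {τ : G}

theorem waterfillingPower_pos_iff : 0 < waterfillingPower a τ ↔ ∃ i, a i < τ := by
  simp [waterfillingPower, Finset.sum_pos_iff_of_nonneg]

theorem sub_le_waterfillingPower (a : ι → G) (τ : G) (i : ι) :
    τ - a i ≤ waterfillingPower a τ :=
  (le_max_left _ _).trans <|
    Finset.single_le_sum (f := fun j ↦ max (τ - a j) 0) (fun _ _ ↦ le_max_right _ _)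
      (Finset.mem_univ i)

theorem strictMonoOn_waterfillingPower (a : ι → G) :
    StrictMonoOn (waterfillingPower a) {τ | ∃ i, a i < τ} := by
  rintro σ ⟨i, hi⟩ τ - hστ
  have increase_at_i : max (σ - a i) 0 < max (τ - a i) 0 :=
    (max_eq_left (sub_pos.2 hi).le).trans_lt (lt_max_of_lt_left (sub_lt_sub_right hστ _))
  exact Finset.sum_lt_sum (fun j _ ↦ by gcongr) ⟨i, Finset.mem_univ i, increase_at_i⟩

end LinearOrderedGroup

section Real

variable {ι : Type*} [Fintype ι] [Nonempty ι] {P : ℝ}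

theorem exists_waterfillingPower_eq (a : ι → ℝ) (hP : 0 ≤ P) :
    ∃ τ, waterfillingPower a τ = P := by
  obtain ⟨τ₀, hτ₀⟩ := Finite.exists_ge a
  obtain ⟨i⟩ := ‹Nonempty ι›
  have power_le : waterfillingPower a τ₀ ≤ P :=
    (not_lt.1 <| waterfillingPower_pos_iff.not.2 <| by simpa using hτ₀).trans hP
  have le_power : P ≤ waterfillingPower a (P + a i) := by
    simpa using sub_le_waterfillingPower a (P + a i) i
  exact mem_range_of_exists_le_of_exists_ge (continuous_waterfillingPower a)
    ⟨τ₀, power_le⟩ ⟨P + a i, le_power⟩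

theorem waterfilling_exists_unique_general (a : ι → ℝ) (hP : 0 < P) :
    ∃! τ, waterfillingPower a τ = P := by
  have above_level {τ : ℝ} (hτ : waterfillingPower a τ = P) : ∃ i, a i < τ :=
    waterfillingPower_pos_iff.1 (hP.trans_eq hτ.symm)
  obtain ⟨τ, hτ⟩ := exists_waterfillingPower_eq a hP.le
  exact ⟨τ, hτ, fun σ hσ ↦ (strictMonoOn_waterfillingPower a).injOn (above_level hσ)
    (above_level hτ) (hσ.trans hτ.symm)⟩

end Real

theorem waterfilling_exists_unique (n : ℕ) (hn : 1 ≤ n) (γ : Fin n → ℝ)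
    (hγ : ∀ i, 0 < γ i) (c P : ℝ) (hc : 0 < c) (hP : 0 < P) :
    ∃! τ : ℝ, 0 < τ ∧ ∑ i, max (τ - c / γ i) 0 = P := by
  have : Nonempty (Fin n) := ⟨⟨0, hn⟩⟩
  have level_pos (τ : ℝ) (hτ : waterfillingPower (fun i ↦ c / γ i) τ = P) : 0 < τ :=
    let ⟨i, hi⟩ := waterfillingPower_pos_iff.1 (hP.trans_eq hτ.symm)
    (div_pos hc (hγ i)).trans hi
  exact (existsUnique_congr fun τ ↦ and_iff_right_of_imp (level_pos τ)).2
    (waterfilling_exists_unique_general _ hP)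
end

section
/- Fix θ ∈ (−π/2, π/2). For ε ∈ (0,1) define F(ε) = (π/(4·ψ₂(ε)·ε²)) · (ψ₂(ε)·Δ(ε) − 1)/(ψ₂(ε)·Δ(ε) + 1). Then F(ε) − (π/12)·cos²θ = O(ε²) as ε → 0⁺. -/
open Real Filter Asymptotics Topology

noncomputable def ψ₂ (θ ε : ℝ) : ℝ :=
  (1 / (2 * ε)) * ∫ x in (-ε)..ε, ((x - sin θ) ^ 2 + cos θ ^ 2)⁻¹

noncomputable def Δ (θ ε : ℝ) : ℝ :=
  Real.sqrt ((1 - ε ^ 2) ^ 2 + (2 * ε * cos θ) ^ 2)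

/-!
Write `s = sin θ` and `t = ε ^ 2`. The integrand of `ψ₂` is `(1 - 2 * s * x + x ^ 2)⁻¹`, the
generating function of the Chebyshev polynomials of the second kind. Averaging over `[-ε, ε]` kills
its odd powers, so `ψ₂ = 1 + U₂(s) / 3 * t + O(t ^ 2)`, while
`Δ ^ 2 = 1 + 2 * cos (2 * θ) * t + t ^ 2` gives `Δ = 1 + cos (2 * θ) * t + O(t ^ 2)`. Hence
`h = (ψ₂ * Δ - 1) / t` is `2 / 3 * cos θ ^ 2 + O(t)`, and the threshold is a function of
`(ψ₂, Δ, h)` that is differentiable at `(1, 1, 2 / 3 * cos θ ^ 2)`, so it differs from its value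
there by `O(t)`.
-/

open Polynomial (Chebyshev.U)

section FirstOrderExpansions

variable {α 𝕜 : Type*} [NormedField 𝕜] {l : Filter α} {u v g : α → 𝕜} {a b c d : 𝕜}

lemma isBigO_sub_const_of_expansion (hg : Tendsto g l (𝓝 0))
    (hu : (fun x => u x - (c + a * g x)) =O[l] fun x => g x ^ 2) :
    (fun x => u x - c) =O[l] g := by
  have hg2 : (fun x => g x ^ 2) =O[l] g := by
    simpa [sq] using (hg.isBigO_one 𝕜).mul (isBigO_refl g l)
  refine ((hu.trans hg2).add ((isBigO_refl g l).const_mul_left a)).congr_left fun x => ?_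
  ring

lemma tendsto_of_isBigO_sub_const (hg : Tendsto g l (𝓝 0)) (hu : (fun x => u x - c) =O[l] g) :
    Tendsto u l (𝓝 c) :=
  tendsto_sub_nhds_zero_iff.mp (hu.trans_tendsto hg)

lemma isBigO_mul_expansion (hg : Tendsto g l (𝓝 0))
    (hu : (fun x => u x - (c + a * g x)) =O[l] fun x => g x ^ 2)
    (hv : (fun x => v x - (d + b * g x)) =O[l] fun x => g x ^ 2) :
    (fun x => u x * v x - (c * d + (a * d + c * b) * g x)) =O[l] fun x => g x ^ 2 := by
  have v_bounded : v =O[l] fun _ => (1 : 𝕜) :=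
    (tendsto_of_isBigO_sub_const hg (isBigO_sub_const_of_expansion hg hv)).isBigO_one 𝕜
  have linear_bounded : (fun x => c + a * g x) =O[l] fun _ => (1 : 𝕜) :=
    ((hg.const_mul a).const_add c).isBigO_one 𝕜
  have hu' : (fun x => (u x - (c + a * g x)) * v x) =O[l] fun x => g x ^ 2 := by
    simpa only [mul_one] using hu.mul v_bounded
  have hv' : (fun x => (c + a * g x) * (v x - (d + b * g x))) =O[l] fun x => g x ^ 2 := by
    simpa only [one_mul] using linear_bounded.mul hv
  refine ((hu'.add hv').add ((isBigO_refl _ l).const_mul_left (a * b))).congr_left fun x => ?_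
  ring

lemma isBigO_div_sub_of_expansion (hg : ∀ᶠ x in l, g x ≠ 0)
    (hu : (fun x => u x - (c + a * g x)) =O[l] fun x => g x ^ 2) :
    (fun x => (u x - c) / g x - a) =O[l] g := by
  refine (hu.mul (isBigO_refl (fun x => (g x)⁻¹) l)).congr' ?_ ?_ <;>
    filter_upwards [hg] with x hx <;> field_simp
  ring

end FirstOrderExpansions

/-- The normalized threshold `F` as a function of `ψ = ψ₂(ε)`, `d = Δ(ε)` and `t = ε²`. -/
noncomputable def snrThreshold (ψ d t : ℝ) : ℝ :=
  π / (4 * ψ * t) * ((ψ * d - 1) / (ψ * d + 1))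

lemma snrThreshold_eq_slope (ψ d t : ℝ) :
    snrThreshold ψ d t = π / 4 * ((ψ * d - 1) / t) / (ψ * (ψ * d + 1)) := by
  simp only [snrThreshold, div_eq_mul_inv, mul_inv]
  ring

lemma isBigO_snrThreshold_sub {α : Type*} {l : Filter α} {ψ d g : α → ℝ} {a b : ℝ}
    (hg : Tendsto g l (𝓝[≠] 0))
    (hψ : (fun x => ψ x - (1 + a * g x)) =O[l] fun x => g x ^ 2)
    (hd : (fun x => d x - (1 + b * g x)) =O[l] fun x => g x ^ 2) :
    (fun x => snrThreshold (ψ x) (d x) (g x) - π / 8 * (a + b)) =O[l] g := by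
  obtain ⟨hg0, hg_ne⟩ := tendsto_nhdsWithin_iff.mp hg
  have hψ1 := isBigO_sub_const_of_expansion hg0 hψ
  have hd1 := isBigO_sub_const_of_expansion hg0 hd
  have hslope : (fun x => (ψ x * d x - 1) / g x - (a + b)) =O[l] g := by
    refine isBigO_div_sub_of_expansion hg_ne ?_
    simpa only [mul_one, one_mul] using isBigO_mul_expansion hg0 hψ hd
  have hdiff : DifferentiableAt ℝ
      (fun p : ℝ × ℝ × ℝ => π / 4 * p.2.2 / (p.1 * (p.1 * p.2.1 + 1))) (1, 1, a + b) := by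
    fun_prop (disch := norm_num)
  have htendsto : Tendsto (fun x => (ψ x, d x, (ψ x * d x - 1) / g x)) l (𝓝 (1, 1, a + b)) :=
    (tendsto_of_isBigO_sub_const hg0 hψ1).prodMk_nhds
      ((tendsto_of_isBigO_sub_const hg0 hd1).prodMk_nhds
        (tendsto_of_isBigO_sub_const hg0 hslope))
  refine ((hdiff.isBigO_sub.comp_tendsto htendsto).trans
    (hψ1.prod_left (hd1.prod_left hslope))).congr_left fun x => ?_
  simp only [Function.comp_apply, snrThreshold_eq_slope]
  ring

section SymmetricAverages

variable {E : Type*} [NormedAddCommGroup E] [NormedSpace ℝ E]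

lemma isBigO_intervalAverage_neg_self {f : ℝ → E} {n : ℕ} (hf : f =O[𝓝 0] fun x => x ^ n) :
    (fun ε => ⨍ x in -ε..ε, f x) =O[𝓝 0] fun ε => ε ^ n := by
  obtain ⟨C, hC, hfC⟩ := hf.exists_nonneg
  obtain ⟨r, hr, hball⟩ := Metric.eventually_nhds_iff_ball.mp hfC.bound
  refine IsBigO.of_bound C ?_
  filter_upwards [Metric.ball_mem_nhds 0 hr] with ε hε
  have hbound : ∀ x ∈ Set.uIoc (-ε) ε, ‖f x‖ ≤ C * ‖ε ^ n‖ := fun x hx => by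
    have hxε : |x| ≤ |ε| := by
      rcases Set.mem_uIoc.mp hx with h | h <;> grind
    have hx_ball : x ∈ Metric.ball 0 r := by
      simp only [mem_ball_zero_iff, norm_eq_abs] at hε ⊢
      exact hxε.trans_lt hε
    refine (hball x hx_ball).trans ?_
    simp only [norm_pow, norm_eq_abs]
    gcongr
  have hint := intervalIntegral.norm_integral_le_of_norm_le_const hbound
  rw [interval_average_eq, norm_smul, norm_inv, norm_eq_abs]
  exact inv_mul_le_of_le_mul₀ (abs_nonneg _) (by positivity) (by rwa [mul_comm])

lemma isBigO_intervalAverage_sub {f g : ℝ → E} {n : ℕ}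
    (hf : ∀ᶠ ε in 𝓝 0, IntervalIntegrable f MeasureTheory.volume (-ε) ε)
    (hg : ∀ᶠ ε in 𝓝 0, IntervalIntegrable g MeasureTheory.volume (-ε) ε)
    (hfg : (fun x => f x - g x) =O[𝓝 0] fun x => x ^ n) :
    (fun ε => (⨍ x in -ε..ε, f x) - ⨍ x in -ε..ε, g x) =O[𝓝 0] fun ε => ε ^ n := by
  refine (isBigO_intervalAverage_neg_self hfg).congr' ?_ .rfl
  filter_upwards [hf, hg] with ε hfε hgε
  simp only [interval_average_eq, intervalIntegral.integral_sub hfε hgε, smul_sub]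

lemma intervalAverage_neg_self_pow {ε : ℝ} (hε : ε ≠ 0) (n : ℕ) :
    ⨍ x in -ε..ε, x ^ n = if Even n then ε ^ n / (n + 1) else 0 := by
  rw [interval_average_eq_div, integral_pow]
  have hn : (n : ℝ) + 1 ≠ 0 := by positivity
  split_ifs with h
  · rw [h.add_one.neg_pow]
    field_simp
    ring
  · rw [(Nat.not_even_iff_odd.mp h).add_one.neg_pow, sub_self, zero_div, zero_div]

lemma intervalAverage_neg_self_sum_pow {ε : ℝ} (hε : ε ≠ 0) (n : ℕ) (c : ℕ → ℝ) :
    ⨍ x in -ε..ε, ∑ k ∈ Finset.range n, c k * x ^ k =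
      ∑ k ∈ Finset.range n, c k * if Even k then ε ^ k / (k + 1) else 0 := by
  simp only [← intervalAverage_neg_self_pow hε, interval_average_eq_div]
  rw [intervalIntegral.integral_finsetSum fun k _ =>
    Continuous.intervalIntegrable (by fun_prop) _ _]
  simp only [intervalIntegral.integral_const_mul, Finset.sum_div, mul_div_assoc]

end SymmetricAverages

section ChebyshevGeneratingFunction

lemma chebyshevU_generating_mul {R : Type*} [CommRing R] (s x : R) (n : ℕ) :
    (1 - 2 * s * x + x ^ 2) * ∑ k ∈ Finset.range n, (Chebyshev.U R k).eval s * x ^ k =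
      1 - (Chebyshev.U R n).eval s * x ^ n
        + (Chebyshev.U R (n - 1)).eval s * x ^ (n + 1) := by
  induction n with
  | zero => simp
  | succ n ih =>
    rw [Finset.sum_range_succ, mul_add, ih]
    push_cast
    rw [Polynomial.Chebyshev.U_add_one R n, add_sub_cancel_right]
    simp only [Polynomial.eval_sub, Polynomial.eval_mul, Polynomial.eval_X,
      Polynomial.eval_ofNat]
    ring

lemma isBigO_inv_sub_sum_chebyshevU {𝕜 : Type*} [NormedField 𝕜] (s : 𝕜) (n : ℕ) :
    (fun x => (1 - 2 * s * x + x ^ 2)⁻¹ -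
      ∑ k ∈ Finset.range n, (Chebyshev.U 𝕜 k).eval s * x ^ k) =O[𝓝 0] fun x => x ^ n := by
  have hcont : ContinuousAt (fun x => 1 - 2 * s * x + x ^ 2) 0 := by fun_prop
  have hfactor : ContinuousAt (fun x => ((Chebyshev.U 𝕜 n).eval s
      - (Chebyshev.U 𝕜 (n - 1)).eval s * x) * (1 - 2 * s * x + x ^ 2)⁻¹) 0 :=
    ContinuousAt.mul (by fun_prop) (hcont.inv₀ (by simp))
  refine ((hfactor.tendsto.isBigO_one 𝕜).mul (isBigO_refl (fun x => x ^ n) _)).congr' ?_ ?_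
  · filter_upwards [hcont.eventually_ne (show (1 : 𝕜) - 2 * s * 0 + 0 ^ 2 ≠ 0 by simp)] with x hx
    have hsum := chebyshevU_generating_mul s x n
    rw [← div_eq_mul_inv, ← one_div, eq_sub_iff_add_eq, div_mul_eq_mul_div, div_add' _ _ _ hx,
      mul_comm _ (1 - 2 * s * x + x ^ 2), hsum]
    ring
  · exact .of_forall fun x => one_mul _

end ChebyshevGeneratingFunction

lemma isBigO_sqrt_sub {α : Type*} {l : Filter α} {y p g : α → ℝ} {c : ℝ} (hc : 0 < c)
    (hy : Tendsto y l (𝓝 (c ^ 2))) (hp : Tendsto p l (𝓝 c))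
    (hyp : (fun x => y x - p x ^ 2) =O[l] g) :
    (fun x => √(y x) - p x) =O[l] g := by
  refine (((hasStrictDerivAt_sqrt (by positivity)).hasStrictFDerivAt.isBigO_sub.comp_tendsto
    (hy.prodMk_nhds (hp.pow 2))).trans hyp).congr' ?_ .rfl
  filter_upwards [hp.eventually_const_lt hc] with x hx
  simp only [Function.comp_apply, sqrt_sq hx.le]

lemma ψ₂_eq_intervalAverage (θ ε : ℝ) :
    ψ₂ θ ε = ⨍ x in -ε..ε, (1 - 2 * sin θ * x + x ^ 2)⁻¹ := by
  rw [ψ₂, interval_average_eq, smul_eq_mul]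
  congr 1
  · rw [sub_neg_eq_add, ← two_mul, one_div]
  · congr! 3 with x
    linear_combination sin_sq_add_cos_sq θ

lemma isBigO_ψ₂_sub (θ : ℝ) :
    (fun ε => ψ₂ θ ε - (1 + (4 * sin θ ^ 2 - 1) / 3 * ε ^ 2)) =O[𝓝[≠] 0] fun ε => ε ^ 4 := by
  have hcont : ContinuousAt (fun x => (1 - 2 * sin θ * x + x ^ 2)⁻¹) 0 :=
    ContinuousAt.inv₀ (by fun_prop) (by simp)
  have hint : ∀ᶠ ε in 𝓝 0, IntervalIntegrable (fun x => (1 - 2 * sin θ * x + x ^ 2)⁻¹)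
      MeasureTheory.volume (-ε) ε :=
    hcont.tendsto.eventually_intervalIntegrable
      (Measurable.stronglyMeasurable (by fun_prop)).stronglyMeasurableAtFilter
      (MeasureTheory.volume.finiteAt_nhds 0) (Continuous.tendsto' (by fun_prop) _ _ neg_zero)
      tendsto_id
  have havg := isBigO_intervalAverage_sub hint
    (.of_forall fun ε => Continuous.intervalIntegrable (by fun_prop) _ _)
    (isBigO_inv_sub_sum_chebyshevU (sin θ) 4)
  refine (havg.mono nhdsWithin_le_nhds).congr' ?_ .rfl
  filter_upwards [self_mem_nhdsWithin] with ε hε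
  rw [ψ₂_eq_intervalAverage, intervalAverage_neg_self_sum_pow hε]
  have not_even_three : ¬ Even 3 := by decide
  simp [Finset.sum_range_succ, Polynomial.Chebyshev.U_two, not_even_three, mul_div_assoc',
    div_mul_eq_mul_div, two_add_one_eq_three]

lemma isBigO_Δ_sub (θ : ℝ) :
    (fun ε => Δ θ ε - (1 + cos (2 * θ) * ε ^ 2)) =O[𝓝 0] fun ε => ε ^ 4 := by
  have hradicand : Tendsto (fun ε => (1 - ε ^ 2) ^ 2 + (2 * ε * cos θ) ^ 2) (𝓝 0) (𝓝 (1 ^ 2)) :=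
    Continuous.tendsto' (by fun_prop) _ _ (by simp)
  have hp : Tendsto (fun ε => 1 + cos (2 * θ) * ε ^ 2) (𝓝 0) (𝓝 1) :=
    Continuous.tendsto' (by fun_prop) _ _ (by simp)
  refine isBigO_sqrt_sub one_pos hradicand hp ?_
  refine ((isBigO_refl _ _).const_mul_left (1 - cos (2 * θ) ^ 2)).congr_left fun ε => ?_
  rw [cos_two_mul]
  ring

theorem snr_threshold1_3x3_asymptotics_general (θ : ℝ) :
    (fun ε : ℝ =>
        (π / (4 * ψ₂ θ ε * ε ^ 2)) *
            ((ψ₂ θ ε * Δ θ ε - 1) / (ψ₂ θ ε * Δ θ ε + 1)) -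
          (π / 12) * cos θ ^ 2) =O[𝓝[≠] (0 : ℝ)] fun ε => ε ^ 2 := by
  have hsq : Tendsto (fun ε : ℝ => ε ^ 2) (𝓝[≠] 0) (𝓝[≠] 0) := by
    refine tendsto_nhdsWithin_of_tendsto_nhds_of_eventually_within _ ?_ ?_
    · exact (Continuous.tendsto' (by fun_prop) _ _ (by simp)).mono_left nhdsWithin_le_nhds
    · exact eventually_mem_nhdsWithin.mono fun ε hε => pow_ne_zero 2 hε
  have hψ := isBigO_ψ₂_sub θ
  have hΔ := (isBigO_Δ_sub θ).mono (nhdsWithin_le_nhds (s := {0}ᶜ))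
  simp only [show ∀ ε : ℝ, ε ^ 4 = (ε ^ 2) ^ 2 from fun ε => by ring] at hψ hΔ
  have hcoeff : π / 8 * ((4 * sin θ ^ 2 - 1) / 3 + cos (2 * θ)) = π / 12 * cos θ ^ 2 := by
    rw [sin_sq, cos_two_mul]
    ring
  simpa only [hcoeff, snrThreshold] using isBigO_snrThreshold_sub hsq hψ hΔ

theorem snr_threshold1_3x3_asymptotics (θ : ℝ) (hθ : θ ∈ Set.Ioo (-(π / 2)) (π / 2)) :
    (fun ε : ℝ =>
        (π / (4 * ψ₂ θ ε * ε ^ 2)) *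
            ((ψ₂ θ ε * Δ θ ε - 1) / (ψ₂ θ ε * Δ θ ε + 1)) -
          (π / 12) * cos θ ^ 2) =O[𝓝[>] (0 : ℝ)] fun ε => ε ^ 2 :=
  (snr_threshold1_3x3_asymptotics_general θ).mono (nhdsGT_le_nhdsNE 0)
end

section
/- Fix θ ∈ (−π/2, π/2). For ε ∈ (0,1) define S(ε) = ψ₂(ε)·[ψ₄(ε) − √((ψ₄(ε) − 2 cos²θ·ψ₆(ε))² + 4 cos²θ·ψ̄₅(ε)²)] / (2 cos⁴θ·[ψ₆(ε)·(ψ₄(ε) − cos²θ·ψ₆(ε)) − ψ̄₅(ε)²]) − 1 and F(ε) = (π/(4·ψ₂(ε)·ε²))·S(ε). Then F(ε) − (π/4)·[ tan²θ·ε⁻² − (4 cos⁴θ − 16 cos²θ + 10)/(3 cos²θ) ] = O(ε²) as ε → 0⁺. -/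
open Real Filter Asymptotics Topology

noncomputable def ψ₄ (θ ε : ℝ) : ℝ :=
  (1 / (2 * ε)) * ∫ x in (-ε)..ε, (((x - sin θ) ^ 2 + cos θ ^ 2) ^ 2)⁻¹

noncomputable def ψ₆ (θ ε : ℝ) : ℝ :=
  (1 / (2 * ε)) * ∫ x in (-ε)..ε, (((x - sin θ) ^ 2 + cos θ ^ 2) ^ 3)⁻¹

noncomputable def ψ₅' (θ ε : ℝ) : ℝ :=
  (1 / (2 * ε)) * ∫ x in (-ε)..ε, (x - sin θ) * (((x - sin θ) ^ 2 + cos θ ^ 2) ^ 3)⁻¹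

/-!
Write `Δ = ψ₆ (ψ₄ - cos² θ ψ₆) - ψ̄₅²` and let `R` be the square root in the numerator of `S`. Both
`ψ₄ - R` and `Δ` vanish as `ε → 0`, but `R² = ψ₄² - 4 cos² θ Δ`, so multiplying through by `ψ₄ + R`
cancels `Δ` and leaves `S = ψ₂ (2 / (cos² θ (ψ₄ + R)) - 1 / ψ₂)`. Since `Δ = ε² / 3 + O(ε⁴)`, this
is legitimate for small `ε ≠ 0`. All denominators now have nonzero limits, and the claim follows
from the expansions of `ψ₂`, `ψ₄`, `ψ₆` and `ψ̄₅` modulo `ε⁴`. For these, only the even part of the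
integrand matters: a Taylor expansion `a + b x + c x² + d x³ + O(x⁴)` has mean
`a + c ε² / 3 + O(ε⁴)` over `[-ε, ε]`.
-/

lemma isBigO_one_nhdsNE_of_continuous {X E : Type*} [TopologicalSpace X]
    [SeminormedAddCommGroup E] {f : X → E} (hf : Continuous f) (x : X) :
    f =O[𝓝[≠] x] fun _ => (1 : ℝ) :=
  (hf.continuousAt.mono_left nhdsWithin_le_nhds).isBigO_one ℝ

/-- `f x = a + b x + c x² + d x³ + O(x⁴)` as `x → 0`, the value `f 0` being irrelevant. Both the
integrands, as functions of `x`, and their means, as functions of `ε`, are expanded this way. -/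
def HasCubicExpansion (f : ℝ → ℝ) (a b c d : ℝ) : Prop :=
  (fun x => f x - (a + b * x + c * x ^ 2 + d * x ^ 3)) =O[𝓝[≠] 0] fun x => x ^ 4

lemma hasCubicExpansion_cubic (a b c d : ℝ) :
    HasCubicExpansion (fun x => a + b * x + c * x ^ 2 + d * x ^ 3) a b c d := by
  simpa [HasCubicExpansion] using isBigO_zero _ _

lemma hasCubicExpansion_const (a : ℝ) : HasCubicExpansion (fun _ => a) a 0 0 0 := by
  simpa using hasCubicExpansion_cubic a 0 0 0

namespace HasCubicExpansion

variable {f g : ℝ → ℝ} {a b c d a' b' c' d' : ℝ}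

lemma congr_coeff (hf : HasCubicExpansion f a b c d) (ha : a = a') (hb : b = b') (hc : c = c')
    (hd : d = d') : HasCubicExpansion f a' b' c' d' := by
  subst ha hb hc hd
  exact hf

lemma tendsto (hf : HasCubicExpansion f a b c d) : Tendsto f (𝓝[≠] 0) (𝓝 a) := by
  have hrem : Tendsto (fun x : ℝ => x ^ 4) (𝓝[≠] 0) (𝓝 0) :=
    (Continuous.tendsto' (by fun_prop) 0 0 (by simp)).mono_left nhdsWithin_le_nhds
  have hpoly : Tendsto (fun x : ℝ => a + b * x + c * x ^ 2 + d * x ^ 3) (𝓝[≠] 0) (𝓝 a) :=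
    (Continuous.tendsto' (by fun_prop) 0 a (by simp)).mono_left nhdsWithin_le_nhds
  simpa using (IsBigO.trans_tendsto hf hrem).add hpoly

lemma add (hf : HasCubicExpansion f a b c d) (hg : HasCubicExpansion g a' b' c' d') :
    HasCubicExpansion (fun x => f x + g x) (a + a') (b + b') (c + c') (d + d') :=
  (IsBigO.add hf hg).congr_left fun x => by ring

lemma sub (hf : HasCubicExpansion f a b c d) (hg : HasCubicExpansion g a' b' c' d') :
    HasCubicExpansion (fun x => f x - g x) (a - a') (b - b') (c - c') (d - d') :=
  (IsBigO.sub hf hg).congr_left fun x => by ring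

lemma const_mul (hf : HasCubicExpansion f a b c d) (k : ℝ) :
    HasCubicExpansion (fun x => k * f x) (k * a) (k * b) (k * c) (k * d) :=
  (IsBigO.const_mul_left hf k).congr_left fun x => by ring

lemma mul (hf : HasCubicExpansion f a b c d) (hg : HasCubicExpansion g a' b' c' d') :
    HasCubicExpansion (fun x => f x * g x) (a * a') (a * b' + b * a')
      (a * c' + b * b' + c * a') (a * d' + b * c' + c * b' + d * a') := by
  have hleft : (fun x => (f x - (a + b * x + c * x ^ 2 + d * x ^ 3)) * g x)
      =O[𝓝[≠] 0] fun x => x ^ 4 := by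
    simpa using IsBigO.mul hf (hg.tendsto.isBigO_one ℝ)
  have hright : (fun x => (g x - (a' + b' * x + c' * x ^ 2 + d' * x ^ 3))
      * (a + b * x + c * x ^ 2 + d * x ^ 3)) =O[𝓝[≠] 0] fun x => x ^ 4 := by
    simpa using IsBigO.mul hg (isBigO_one_nhdsNE_of_continuous (by fun_prop) 0)
  have htrunc : (fun x => x ^ 4 * ((b * d' + c * c' + d * b') + (c * d' + d * c') * x
      + d * d' * x ^ 2)) =O[𝓝[≠] 0] fun x => x ^ 4 := by
    simpa using (isBigO_refl (fun x : ℝ => x ^ 4) _).mul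
      (isBigO_one_nhdsNE_of_continuous (by fun_prop) 0)
  exact ((hleft.add hright).add htrunc).congr_left fun x => by ring

lemma sq (hf : HasCubicExpansion f a b c d) :
    HasCubicExpansion (fun x => f x ^ 2) (a ^ 2) (2 * a * b) (2 * a * c + b ^ 2)
      (2 * a * d + 2 * b * c) :=
  IsBigO.congr_left (hf.mul hf) fun x => by ring

lemma inv (hf : HasCubicExpansion f a b c d) (ha : a ≠ 0) :
    HasCubicExpansion (fun x => (f x)⁻¹) a⁻¹ (-b / a ^ 2) ((b ^ 2 - a * c) / a ^ 3)
      ((2 * a * b * c - a ^ 2 * d - b ^ 3) / a ^ 4) := by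
  let p : ℝ → ℝ := fun x => a⁻¹ + -b / a ^ 2 * x + (b ^ 2 - a * c) / a ^ 3 * x ^ 2
    + (2 * a * b * c - a ^ 2 * d - b ^ 3) / a ^ 4 * x ^ 3
  have hdefect : HasCubicExpansion (fun x => 1 - f x * p x) 0 0 0 0 := by
    convert (hasCubicExpansion_const 1).sub (hf.mul (hasCubicExpansion_cubic ..)) using 1 <;>
      field_simp <;> ring
  have hbound : (fun x => (1 - f x * p x) * (f x)⁻¹) =O[𝓝[≠] 0] fun x => x ^ 4 := by
    simpa using IsBigO.mul hdefect ((hf.tendsto.inv₀ ha).isBigO_one ℝ)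
  refine hbound.congr' ?_ .rfl
  filter_upwards [hf.tendsto.eventually_ne ha] with x hx
  rw [sub_mul, one_mul, mul_right_comm, mul_inv_cancel₀ hx, one_mul]

lemma sqrt (ha : 0 < a) (hf : HasCubicExpansion f (a ^ 2) (2 * a * b) (2 * a * c + b ^ 2)
      (2 * a * d + 2 * b * c)) :
    HasCubicExpansion (fun x => √(f x)) a b c d := by
  let p : ℝ → ℝ := fun x => a + b * x + c * x ^ 2 + d * x ^ 3
  have hp : HasCubicExpansion p a b c d := hasCubicExpansion_cubic a b c d
  have hdefect : HasCubicExpansion (fun x => f x - p x ^ 2) 0 0 0 0 := by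
    simpa only [sub_self] using hf.sub hp.sq
  have hsum : Tendsto (fun x => √(f x) + p x) (𝓝[≠] 0) (𝓝 (a + a)) := by
    simpa only [sqrt_sq ha.le] using hf.tendsto.sqrt.add hp.tendsto
  have hsum_ne : a + a ≠ 0 := by positivity
  have hbound : (fun x => (f x - p x ^ 2) * (√(f x) + p x)⁻¹) =O[𝓝[≠] 0] fun x => x ^ 4 := by
    simpa using IsBigO.mul hdefect ((hsum.inv₀ hsum_ne).isBigO_one ℝ)
  refine hbound.congr' ?_ .rfl
  filter_upwards [hsum.eventually_ne hsum_ne,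
    hf.tendsto.eventually_const_lt (pow_pos ha 2)] with x hx hfx
  rw [← div_eq_mul_inv, div_eq_iff hx]
  linear_combination -sq_sqrt hfx.le

lemma inv_sq_mul (hf : HasCubicExpansion f a b c d) :
    (fun x => (x ^ 2)⁻¹ * f x - (a * (x ^ 2)⁻¹ + b * x⁻¹ + c + d * x))
      =O[𝓝[≠] 0] fun x => x ^ 2 := by
  refine ((isBigO_refl (fun x : ℝ => (x ^ 2)⁻¹) (𝓝[≠] 0)).mul hf).congr' ?_ ?_ <;>
    filter_upwards [self_mem_nhdsWithin] with x (hx : x ≠ 0) <;> field_simp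

lemma eventually_ne_zero (hf : HasCubicExpansion f 0 0 c d) (hc : c ≠ 0) :
    ∀ᶠ x in 𝓝[≠] 0, f x ≠ 0 := by
  have hsq : Tendsto (fun x : ℝ => x ^ 2) (𝓝[≠] 0) (𝓝 0) :=
    (Continuous.tendsto' (by fun_prop) 0 0 (by simp)).mono_left nhdsWithin_le_nhds
  have hlin : Tendsto (fun x => c + d * x) (𝓝[≠] 0) (𝓝 c) :=
    (Continuous.tendsto' (by fun_prop) 0 c (by simp)).mono_left nhdsWithin_le_nhds
  have hquot : Tendsto (fun x => (x ^ 2)⁻¹ * f x) (𝓝[≠] 0) (𝓝 c) := by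
    simpa using (hf.inv_sq_mul.trans_tendsto hsq).add hlin
  filter_upwards [hquot.eventually_ne hc] with x hx
  exact right_ne_zero_of_mul hx

end HasCubicExpansion

/-- The mean of `f` over the symmetric interval `[-ε, ε]`, which is `0` at `ε = 0`. -/
noncomputable def symmetricMean (f : ℝ → ℝ) (ε : ℝ) : ℝ :=
  (1 / (2 * ε)) * ∫ x in (-ε)..ε, f x

lemma symmetricMean_sub {f g : ℝ → ℝ} {ε : ℝ}
    (hf : IntervalIntegrable f MeasureTheory.volume (-ε) ε)
    (hg : IntervalIntegrable g MeasureTheory.volume (-ε) ε) :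
    symmetricMean (fun x => f x - g x) ε = symmetricMean f ε - symmetricMean g ε := by
  simp only [symmetricMean, intervalIntegral.integral_sub hf hg, mul_sub]

lemma symmetricMean_cubic (a b c d : ℝ) {ε : ℝ} (hε : ε ≠ 0) :
    symmetricMean (fun x => a + b * x + c * x ^ 2 + d * x ^ 3) ε = a + c / 3 * ε ^ 2 := by
  have hint : ∫ x in (-ε)..ε, (a + b * x + c * x ^ 2 + d * x ^ 3)
      = 2 * a * ε + 2 * c / 3 * ε ^ 3 := by
    have hderiv (x : ℝ) : HasDerivAt
        (fun x => a * x + b / 2 * x ^ 2 + c / 3 * x ^ 3 + d / 4 * x ^ 4)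
        (a + b * x + c * x ^ 2 + d * x ^ 3) x := by
      refine (((((hasDerivAt_id x).const_mul a).add ((hasDerivAt_pow 2 x).const_mul (b / 2))).add
        ((hasDerivAt_pow 3 x).const_mul (c / 3))).add
        ((hasDerivAt_pow 4 x).const_mul (d / 4))).congr_deriv ?_
      push_cast
      ring
    rw [intervalIntegral.integral_eq_sub_of_hasDerivAt (fun x _ => hderiv x)
      (Continuous.intervalIntegrable (by fun_prop) _ _)]
    ring
  rw [symmetricMean, hint]
  field_simp

lemma symmetricMean_isBigO_pow {f : ℝ → ℝ} {n : ℕ} (hf : f =O[𝓝[≠] 0] fun x => x ^ n) :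
    symmetricMean f =O[𝓝[≠] 0] fun ε => ε ^ n := by
  obtain ⟨C, hC, hfC⟩ := hf.exists_nonneg
  obtain ⟨δ, hδ, hbound⟩ := Metric.eventually_nhds_iff.1 (eventually_nhdsWithin_iff.1 hfC.bound)
  refine .of_bound C ?_
  filter_upwards [nhdsWithin_le_nhds (Metric.ball_mem_nhds 0 hδ), self_mem_nhdsWithin]
    with ε hεδ (hε : ε ≠ 0)
  have hε' : 0 < |ε| := abs_pos.2 hε
  have hint : ‖∫ x in (-ε)..ε, f x‖ ≤ C * |ε| ^ n * |ε - -ε| := by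
    refine intervalIntegral.norm_integral_le_of_norm_le_const_ae ?_
    filter_upwards [MeasureTheory.Measure.ae_ne MeasureTheory.volume (0 : ℝ)] with x hx hxε
    have hxε' : |x| ≤ |ε| := by
      rcases Set.mem_uIoc.1 hxε with h | h <;> grind
    calc ‖f x‖ ≤ C * ‖x ^ n‖ := hbound (lt_of_le_of_lt (by simpa using hxε') hεδ) hx
      _ ≤ C * |ε| ^ n := by rw [norm_pow, norm_eq_abs]; gcongr
  calc ‖symmetricMean f ε‖ = (2 * |ε|)⁻¹ * ‖∫ x in (-ε)..ε, f x‖ := by simp [symmetricMean]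
    _ ≤ (2 * |ε|)⁻¹ * (C * |ε| ^ n * |ε - -ε|) := by gcongr
    _ = C * ‖ε ^ n‖ := by
      rw [sub_neg_eq_add, ← two_mul, abs_mul, abs_two, norm_pow, norm_eq_abs]
      field_simp

lemma HasCubicExpansion.symmetricMean {f : ℝ → ℝ} {a b c d : ℝ}
    (hf : HasCubicExpansion f a b c d)
    (hint : ∀ᶠ ε in 𝓝[≠] 0, IntervalIntegrable f MeasureTheory.volume (-ε) ε) :
    HasCubicExpansion (symmetricMean f) a 0 (c / 3) 0 := by
  refine (symmetricMean_isBigO_pow hf).congr' ?_ .rfl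
  filter_upwards [hint, self_mem_nhdsWithin] with ε hfε (hε : ε ≠ 0)
  rw [symmetricMean_sub hfε (Continuous.intervalIntegrable (by fun_prop) _ _),
    symmetricMean_cubic a b c d hε]
  ring

/-- The squared distance from the point `(x, 0)` of the array to `(sin θ, cos θ)`, the point at unit
distance in direction `θ`; it is the base of the powers in the paper's integrands at `D = 1`. -/
noncomputable def sqDist (θ x : ℝ) : ℝ := (x - sin θ) ^ 2 + cos θ ^ 2

lemma sqDist_eq (θ x : ℝ) : sqDist θ x = 1 - 2 * sin θ * x + x ^ 2 := by
  rw [sqDist]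
  linear_combination sin_sq_add_cos_sq θ

lemma sqDist_pos {θ : ℝ} (hc : cos θ ≠ 0) (x : ℝ) : 0 < sqDist θ x := by
  unfold sqDist
  positivity

lemma continuous_inv_sqDist_pow {θ : ℝ} (hc : cos θ ≠ 0) (k : ℕ) :
    Continuous fun x => (sqDist θ x ^ k)⁻¹ :=
  .inv₀ (by unfold sqDist; fun_prop) fun x => (pow_pos (sqDist_pos hc x) k).ne'

lemma hasCubicExpansion_inv_sqDist (θ : ℝ) :
    HasCubicExpansion (fun x => (sqDist θ x)⁻¹) 1 (2 * sin θ) (4 * sin θ ^ 2 - 1)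
      (8 * sin θ ^ 3 - 4 * sin θ) := by
  have hq : HasCubicExpansion (sqDist θ) 1 (-(2 * sin θ)) 1 0 := by
    convert hasCubicExpansion_cubic 1 (-(2 * sin θ)) 1 0 using 1
    funext x
    rw [sqDist_eq]
    ring
  convert hq.inv one_ne_zero using 1 <;> ring

/-- The coefficients are those of the generating function `(1 - 2sx + x²)⁻ᵏ` of the Gegenbauer
polynomials, taken at `s = sin θ`. -/
lemma hasCubicExpansion_inv_sqDist_pow (θ : ℝ) (k : ℕ) :
    HasCubicExpansion (fun x => (sqDist θ x ^ k)⁻¹) 1 (2 * k * sin θ)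
      (2 * k * (k + 1) * sin θ ^ 2 - k)
      (4 / 3 * k * (k + 1) * (k + 2) * sin θ ^ 3 - 2 * k * (k + 1) * sin θ) := by
  induction k with
  | zero => simpa using hasCubicExpansion_const 1
  | succ k ih =>
    simp only [pow_succ, mul_inv]
    convert ih.mul (hasCubicExpansion_inv_sqDist θ) using 1 <;> push_cast <;> ring

section SNR

variable {θ : ℝ}

lemma hasCubicExpansion_symmetricMean_inv_sqDist_pow (hc : cos θ ≠ 0) (k : ℕ) :
    HasCubicExpansion (symmetricMean fun x => (sqDist θ x ^ k)⁻¹) 1 0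
      ((2 * k * (k + 1) * sin θ ^ 2 - k) / 3) 0 :=
  (hasCubicExpansion_inv_sqDist_pow θ k).symmetricMean
    (.of_forall fun _ => (continuous_inv_sqDist_pow hc k).intervalIntegrable _ _)

lemma hasCubicExpansion_ψ₂ (hc : cos θ ≠ 0) :
    HasCubicExpansion (ψ₂ θ) 1 0 ((4 * sin θ ^ 2 - 1) / 3) 0 := by
  have h := hasCubicExpansion_symmetricMean_inv_sqDist_pow hc 1
  simp only [pow_one] at h
  exact h.congr_coeff rfl rfl (by push_cast; ring) rfl

lemma hasCubicExpansion_ψ₄ (hc : cos θ ≠ 0) :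
    HasCubicExpansion (ψ₄ θ) 1 0 ((12 * sin θ ^ 2 - 2) / 3) 0 :=
  (hasCubicExpansion_symmetricMean_inv_sqDist_pow hc 2).congr_coeff rfl rfl
    (by push_cast; ring) rfl

lemma hasCubicExpansion_ψ₆ (hc : cos θ ≠ 0) :
    HasCubicExpansion (ψ₆ θ) 1 0 (8 * sin θ ^ 2 - 1) 0 :=
  (hasCubicExpansion_symmetricMean_inv_sqDist_pow hc 3).congr_coeff rfl rfl
    (by push_cast; ring) rfl

lemma hasCubicExpansion_ψ₅' (hc : cos θ ≠ 0) :
    HasCubicExpansion (ψ₅' θ) (-sin θ) 0 (3 * sin θ - 8 * sin θ ^ 3) 0 := by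
  have hlin : HasCubicExpansion (fun x => x - sin θ) (-sin θ) 1 0 0 := by
    simpa [neg_add_eq_sub] using hasCubicExpansion_cubic (-sin θ) 1 0 0
  have hcont : Continuous fun x => (x - sin θ) * (sqDist θ x ^ 3)⁻¹ :=
    .mul (by fun_prop) (continuous_inv_sqDist_pow hc 3)
  have hmean := (hlin.mul (hasCubicExpansion_inv_sqDist_pow θ 3)).symmetricMean
    (.of_forall fun _ => hcont.intervalIntegrable _ _)
  exact hmean.congr_coeff (by ring) rfl (by push_cast; ring) rfl

/-- The determinant in the denominator of the threshold, called `Δ` above. It is the Gram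
determinant of `1` and `x - sin θ` for the mean over `[-ε, ε]` with weight `sqDist θ x ^ (-3)`. -/
noncomputable def snrDet (θ ε : ℝ) : ℝ :=
  ψ₆ θ ε * (ψ₄ θ ε - cos θ ^ 2 * ψ₆ θ ε) - ψ₅' θ ε ^ 2

/-- The square root in the numerator of the threshold, called `R` above. -/
noncomputable def snrRoot (θ ε : ℝ) : ℝ :=
  √((ψ₄ θ ε - 2 * cos θ ^ 2 * ψ₆ θ ε) ^ 2 + 4 * cos θ ^ 2 * ψ₅' θ ε ^ 2)

/-- The quotient `S / ψ₂`, in the form it takes once the numerator of `S` has been rationalized. -/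
noncomputable def snrQuotient (θ ε : ℝ) : ℝ :=
  2 / cos θ ^ 2 * (ψ₄ θ ε + snrRoot θ ε)⁻¹ - (ψ₂ θ ε)⁻¹

lemma hasCubicExpansion_snrDet (hc : cos θ ≠ 0) :
    HasCubicExpansion (snrDet θ) 0 0 (1 / 3) 0 := by
  have h4 := hasCubicExpansion_ψ₄ hc
  have h6 := hasCubicExpansion_ψ₆ hc
  have hdet := (h6.mul (h4.sub (h6.const_mul (cos θ ^ 2)))).sub (hasCubicExpansion_ψ₅' hc).sq
  refine hdet.congr_coeff ?_ ?_ ?_ ?_ <;> simp only [cos_sq'] <;> ring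

lemma hasCubicExpansion_snrRoot (hc : cos θ ≠ 0) :
    HasCubicExpansion (snrRoot θ) 1 0 ((10 - 14 * cos θ ^ 2) / 3) 0 := by
  have hdiff := (hasCubicExpansion_ψ₄ hc).sub
    ((hasCubicExpansion_ψ₆ hc).const_mul (2 * cos θ ^ 2))
  have hradicand := hdiff.sq.add ((hasCubicExpansion_ψ₅' hc).sq.const_mul (4 * cos θ ^ 2))
  refine .sqrt one_pos (hradicand.congr_coeff ?_ ?_ ?_ ?_) <;> simp only [cos_sq'] <;> ring

lemma hasCubicExpansion_snrQuotient (hc : cos θ ≠ 0) :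
    HasCubicExpansion (snrQuotient θ) (tan θ ^ 2) 0
      (-((4 * cos θ ^ 4 - 16 * cos θ ^ 2 + 10) / (3 * cos θ ^ 2))) 0 := by
  have hden := (hasCubicExpansion_ψ₄ hc).add (hasCubicExpansion_snrRoot hc)
  have hquot := ((hden.inv (by norm_num)).const_mul (2 / cos θ ^ 2)).sub
    ((hasCubicExpansion_ψ₂ hc).inv one_ne_zero)
  refine hquot.congr_coeff ?_ (by ring) ?_ (by ring)
  · rw [tan_eq_sin_div_cos, div_pow, sin_sq]
    field_simp
    ring
  · rw [sin_sq]
    field_simp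
    ring

lemma sub_snrRoot_div_snrDet (hc : cos θ ≠ 0) {ε : ℝ} (hdet : snrDet θ ε ≠ 0) :
    (ψ₄ θ ε - snrRoot θ ε) / (2 * cos θ ^ 4 * snrDet θ ε)
      = 2 / cos θ ^ 2 * (ψ₄ θ ε + snrRoot θ ε)⁻¹ := by
  have hprod : (ψ₄ θ ε - snrRoot θ ε) * (ψ₄ θ ε + snrRoot θ ε)
      = 4 * cos θ ^ 2 * snrDet θ ε := by
    have hsq : snrRoot θ ε ^ 2 = _ := sq_sqrt (by positivity)
    rw [snrDet]
    linear_combination -hsq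
  have hprod_ne : (ψ₄ θ ε - snrRoot θ ε) * (ψ₄ θ ε + snrRoot θ ε) ≠ 0 := by
    rw [hprod]
    positivity
  have hsum : ψ₄ θ ε + snrRoot θ ε ≠ 0 := right_ne_zero_of_mul hprod_ne
  field_simp
  linear_combination hprod

lemma threshold_eq_snrQuotient (hc : cos θ ≠ 0) {ε : ℝ} (hdet : snrDet θ ε ≠ 0)
    (hψ₂ : ψ₂ θ ε ≠ 0) :
    π / (4 * ψ₂ θ ε * ε ^ 2) *
        (ψ₂ θ ε * (ψ₄ θ ε - snrRoot θ ε) / (2 * cos θ ^ 4 * snrDet θ ε) - 1)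
      = π / 4 * ((ε ^ 2)⁻¹ * snrQuotient θ ε) := by
  rw [mul_div_assoc, sub_snrRoot_div_snrDet hc hdet, snrQuotient]
  field_simp

end SNR

theorem snr_threshold1_2x3_asymptotics_general (θ : ℝ) (hc : cos θ ≠ 0)
    (S F : ℝ → ℝ)
    (hS : ∀ ε, S ε =
      ψ₂ θ ε *
          (ψ₄ θ ε -
            Real.sqrt ((ψ₄ θ ε - 2 * cos θ ^ 2 * ψ₆ θ ε) ^ 2 +
              4 * cos θ ^ 2 * ψ₅' θ ε ^ 2)) /
        (2 * cos θ ^ 4 *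
          (ψ₆ θ ε * (ψ₄ θ ε - cos θ ^ 2 * ψ₆ θ ε) - ψ₅' θ ε ^ 2)) - 1)
    (hF : ∀ ε, F ε = (π / (4 * ψ₂ θ ε * ε ^ 2)) * S ε) :
    (fun ε : ℝ =>
        F ε -
          (π / 4) * (tan θ ^ 2 * (ε ^ 2)⁻¹ -
            (4 * cos θ ^ 4 - 16 * cos θ ^ 2 + 10) / (3 * cos θ ^ 2)))
      =O[𝓝[≠] (0 : ℝ)] fun ε => ε ^ 2 := by
  have hquot : (fun ε => π / 4 * ((ε ^ 2)⁻¹ * snrQuotient θ ε - (tan θ ^ 2 * (ε ^ 2)⁻¹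
      - (4 * cos θ ^ 4 - 16 * cos θ ^ 2 + 10) / (3 * cos θ ^ 2)))) =O[𝓝[≠] 0] fun ε => ε ^ 2 := by
    simpa [← sub_eq_add_neg] using
      (hasCubicExpansion_snrQuotient hc).inv_sq_mul.const_mul_left (π / 4)
  refine hquot.congr' ?_ .rfl
  filter_upwards [(hasCubicExpansion_snrDet hc).eventually_ne_zero (by norm_num),
    (hasCubicExpansion_ψ₂ hc).tendsto.eventually_ne one_ne_zero] with ε hdet hψ₂
  rw [mul_sub, ← threshold_eq_snrQuotient hc hdet hψ₂, hF, hS, snrRoot, snrDet]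

theorem snr_threshold1_2x3_asymptotics (θ : ℝ) (hθ : θ ∈ Set.Ioo (-(π / 2)) (π / 2))
    (S F : ℝ → ℝ)
    (hS : ∀ ε, S ε =
      ψ₂ θ ε *
          (ψ₄ θ ε -
            Real.sqrt ((ψ₄ θ ε - 2 * cos θ ^ 2 * ψ₆ θ ε) ^ 2 +
              4 * cos θ ^ 2 * ψ₅' θ ε ^ 2)) /
        (2 * cos θ ^ 4 *
          (ψ₆ θ ε * (ψ₄ θ ε - cos θ ^ 2 * ψ₆ θ ε) - ψ₅' θ ε ^ 2)) - 1)
    (hF : ∀ ε, F ε = (π / (4 * ψ₂ θ ε * ε ^ 2)) * S ε) :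
    (fun ε : ℝ =>
        F ε -
          (π / 4) * (tan θ ^ 2 * (ε ^ 2)⁻¹ -
            (4 * cos θ ^ 4 - 16 * cos θ ^ 2 + 10) / (3 * cos θ ^ 2)))
      =O[𝓝[>] (0 : ℝ)] fun ε => ε ^ 2 :=
  (snr_threshold1_2x3_asymptotics_general θ (cos_pos_of_mem_Ioo hθ).ne' S F hS hF).mono
    (nhdsWithin_mono 0 fun _ hε => ne_of_gt hε)
end

section
/- Fix θ ∈ (−π/2, π/2). For ε ∈ (0,1) define S(ε) = ψ₂(ε)·[ψ₄(ε) + 3·√((ψ₄(ε) − 2 cos²θ·ψ₆(ε))² + 4 cos²θ·ψ̄₅(ε)²)] / (2 cos⁴θ·[ψ₆(ε)·(ψ₄(ε) − cos²θ·ψ₆(ε)) − ψ̄₅(ε)²]) − 1 and G(ε) = (π/(4·ψ₂(ε)·ε²))·S(ε). Let B₁ = (5 cos⁴θ − 177 cos²θ + 128)/60 and B₂ = (−350 cos⁶θ + 10242 cos⁴θ − 19311 cos²θ + 10122)/1575. Then G(ε) − (3π/(2 cos⁴θ))·(ε⁻⁴ − 2·B₁·ε⁻² + B₂) = O(ε²)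 as ε → 0⁺. -/
open Real Filter Asymptotics Topology

/-!
Since `sin² θ + cos² θ = 1`, the kernel `(x - sin θ)² + cos² θ` equals `1 - 2 x sin θ + x²`, so its
inverse powers are generating functions of Gegenbauer polynomials in `sin θ`. Averaging over
`[-ε, ε]` keeps the even coefficients, which gives every `ψ` an asymptotic expansion in powers of
`ε²`. Asymptotic expansions may be added, multiplied, inverted and square-rooted as formal power
series, so that `G` has one as well. The denominator of `S` is `ε² / 3 + O(ε⁴)`: its constant
coefficient cancels, hence the leading term `ε⁻⁴` of `G`, and the expansions of `ψ₄`, `ψ₆` and `ψ̄₅`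
are needed up to `ε⁶` to reach the term `B₂`. The factor `ψ₂` of `S` cancels against the one in `G`,
leaving only the correction `-π ε² / (4 ψ₂)` to `ε⁴ G` from the term `-1` of `S`.
-/

section LowCoefficients

open PowerSeries (coeff constantCoeff)
open scoped PowerSeries

lemma coeff_two_mul {R : Type*} [Semiring R] (a b : R⟦X⟧) :
    coeff 2 (a * b) =
      constantCoeff a * coeff 2 b + coeff 1 a * coeff 1 b + coeff 2 a * constantCoeff b := by
  simp [PowerSeries.coeff_mul, Finset.Nat.antidiagonal_succ, add_assoc]

lemma coeff_three_mul {R : Type*} [Semiring R] (a b : R⟦X⟧) :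
    coeff 3 (a * b) = constantCoeff a * coeff 3 b + coeff 1 a * coeff 2 b +
      coeff 2 a * coeff 1 b + coeff 3 a * constantCoeff b := by
  simp [PowerSeries.coeff_mul, Finset.Nat.antidiagonal_succ, add_assoc]

variable {𝕜 : Type*} [Field 𝕜]

lemma coeff_one_inv (a : 𝕜⟦X⟧) : coeff 1 a⁻¹ = -coeff 1 a / constantCoeff a ^ 2 := by
  by_cases ha : constantCoeff a = 0
  · simp [PowerSeries.inv_eq_zero.2 ha, ha]
  have h := congrArg (coeff 1) (PowerSeries.mul_inv_cancel a ha)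
  rw [PowerSeries.coeff_one_mul, PowerSeries.constantCoeff_inv, PowerSeries.coeff_one,
    if_neg one_ne_zero] at h
  field_simp at h ⊢
  linear_combination h

lemma coeff_two_inv (a : 𝕜⟦X⟧) :
    coeff 2 a⁻¹ = coeff 1 a ^ 2 / constantCoeff a ^ 3 - coeff 2 a / constantCoeff a ^ 2 := by
  by_cases ha : constantCoeff a = 0
  · simp [PowerSeries.inv_eq_zero.2 ha, ha]
  have h := congrArg (coeff 2) (PowerSeries.mul_inv_cancel a ha)
  rw [coeff_two_mul, PowerSeries.constantCoeff_inv, coeff_one_inv, PowerSeries.coeff_one,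
    if_neg two_ne_zero] at h
  field_simp at h ⊢
  linear_combination h

end LowCoefficients

section Expansion

open PowerSeries (X C coeff constantCoeff trunc)
open scoped PowerSeries Polynomial

variable {α 𝕜 : Type*} [NormedField 𝕜] {l : Filter α} {u f g : α → 𝕜} {a b : 𝕜⟦X⟧}

/-- The Poincaré asymptotic expansion `f ~ ∑ aₖ uᵏ` along `l` in powers of a gauge function `u`; the
series `∑ aₖ Xᵏ` is formal, so no convergence is involved. -/
def HasExpansion (l : Filter α) (u f : α → 𝕜) (a : 𝕜⟦X⟧) : Prop :=
  ∀ n, (fun x => f x - (trunc n a).eval (u x)) =O[l] fun x => u x ^ n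

lemma X_pow_dvd_sub_trunc (n : ℕ) (a : 𝕜⟦X⟧) : X ^ n ∣ a - (trunc n a : 𝕜⟦X⟧) := by
  nth_rw 1 [a.eq_X_pow_mul_shift_add_trunc n, add_sub_cancel_right]
  exact dvd_mul_right _ _

lemma trunc_eq_zero_of_X_pow_dvd {n : ℕ} (h : X ^ n ∣ a) : trunc n a = 0 := by
  obtain ⟨b, rfl⟩ := h
  exact b.trunc_X_pow_self_mul n

lemma isBigO_eval_of_X_pow_dvd (hu : Tendsto u l (𝓝 0)) {n : ℕ} {p : 𝕜[X]}
    (hp : Polynomial.X ^ n ∣ p) : (fun x => p.eval (u x)) =O[l] fun x => u x ^ n := by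
  obtain ⟨q, rfl⟩ := hp
  have hq : (fun x => q.eval (u x)) =O[l] fun _ => (1 : 𝕜) :=
    ((q.continuous.tendsto 0).comp hu).isBigO_one 𝕜
  simpa using (isBigO_refl (fun x => u x ^ n) l).mul hq

namespace HasExpansion

lemma congr' (hf : HasExpansion l u f a) (h : f =ᶠ[l] g) : HasExpansion l u g a := fun n =>
  (hf n).congr' (h.mono fun x hx => by simp only [hx]) EventuallyEq.rfl

lemma isBigO_of_X_pow_dvd (hf : HasExpansion l u f a) {n : ℕ} (ha : X ^ n ∣ a) :
    f =O[l] fun x => u x ^ n := by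
  simpa [trunc_eq_zero_of_X_pow_dvd ha] using hf n

lemma of_polynomials (hu : Tendsto u l (𝓝 0))
    (h : ∀ n, ∃ p : 𝕜[X], X ^ n ∣ a - (p : 𝕜⟦X⟧) ∧
      (fun x => f x - p.eval (u x)) =O[l] fun x => u x ^ n) :
    HasExpansion l u f a := fun n => by
  obtain ⟨p, hap, hfp⟩ := h n
  have htrunc : Polynomial.X ^ n ∣ p - trunc n a := by
    have hp : trunc n a = trunc n (p : 𝕜⟦X⟧) := by
      rw [← sub_eq_zero, ← PowerSeries.trunc_sub, trunc_eq_zero_of_X_pow_dvd hap]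
    rw [Polynomial.X_pow_dvd_iff]
    intro k hk
    rw [hp, Polynomial.coeff_sub, PowerSeries.coeff_trunc, if_pos hk, Polynomial.coeff_coe,
      sub_self]
  exact (hfp.add (isBigO_eval_of_X_pow_dvd hu htrunc)).congr_left fun x => by
    rw [Polynomial.eval_sub, sub_add_sub_cancel]

lemma polynomial_eval (hu : Tendsto u l (𝓝 0)) (p : 𝕜[X]) :
    HasExpansion l u (fun x => p.eval (u x)) p :=
  of_polynomials hu fun n => ⟨p, by simp, by simpa using isBigO_zero _ _⟩

lemma const (hu : Tendsto u l (𝓝 0)) (c : 𝕜) : HasExpansion l u (fun _ => c) (C c) := by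
  simpa using polynomial_eval hu (Polynomial.C c)

lemma gauge (hu : Tendsto u l (𝓝 0)) : HasExpansion l u u X := by
  simpa using polynomial_eval hu Polynomial.X

lemma tendsto (hu : Tendsto u l (𝓝 0)) (hf : HasExpansion l u f a) :
    Tendsto f l (𝓝 (constantCoeff a)) := by
  have h := (hf 1).trans_tendsto (by simpa using hu)
  simpa using h.add_const (constantCoeff a)

lemma add (hf : HasExpansion l u f a) (hg : HasExpansion l u g b) :
    HasExpansion l u (fun x => f x + g x) (a + b) := fun n =>
  ((hf n).add (hg n)).congr_left fun x => by
    rw [map_add, Polynomial.eval_add, add_sub_add_comm]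

lemma sub (hf : HasExpansion l u f a) (hg : HasExpansion l u g b) :
    HasExpansion l u (fun x => f x - g x) (a - b) := fun n =>
  ((hf n).sub (hg n)).congr_left fun x => by
    rw [PowerSeries.trunc_sub, Polynomial.eval_sub, sub_sub_sub_comm]

lemma mul (hu : Tendsto u l (𝓝 0)) (hf : HasExpansion l u f a) (hg : HasExpansion l u g b) :
    HasExpansion l u (fun x => f x * g x) (a * b) :=
  of_polynomials hu fun n => by
    refine ⟨trunc n a * trunc n b, ?_, ?_⟩
    · rw [Polynomial.coe_mul, show a * b - (trunc n a : 𝕜⟦X⟧) * (trunc n b : 𝕜⟦X⟧) =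
        (a - trunc n a) * b + trunc n a * (b - trunc n b) by ring]
      exact ((X_pow_dvd_sub_trunc n a).mul_right b).add ((X_pow_dvd_sub_trunc n b).mul_left _)
    · have hg1 := (hg.tendsto hu).isBigO_one 𝕜
      have ha1 : (fun x => (trunc n a).eval (u x)) =O[l] fun _ => (1 : 𝕜) :=
        (((trunc n a).continuous.tendsto 0).comp hu).isBigO_one 𝕜
      have h₁ := (hf n).mul hg1
      have h₂ := ha1.mul (hg n)
      simp only [mul_one, one_mul] at h₁ h₂
      refine (h₁.add h₂).congr_left fun x => ?_
      rw [Polynomial.eval_mul]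
      ring

lemma const_mul (c : 𝕜) (hf : HasExpansion l u f a) :
    HasExpansion l u (fun x => c * f x) (C c * a) := fun n =>
  ((hf n).const_mul_left c).congr_left fun x => by
    rw [PowerSeries.trunc_C_mul, Polynomial.eval_C_mul, mul_sub]

lemma pow (hu : Tendsto u l (𝓝 0)) (hf : HasExpansion l u f a) (k : ℕ) :
    HasExpansion l u (fun x => f x ^ k) (a ^ k) := by
  induction k with
  | zero => simpa using const hu 1
  | succ k ih => simpa only [pow_succ] using ih.mul hu hf

lemma inv (hu : Tendsto u l (𝓝 0)) (hf : HasExpansion l u f a) (ha : constantCoeff a ≠ 0) :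
    HasExpansion l u (fun x => (f x)⁻¹) a⁻¹ := fun n => by
  have hf0 := hf.tendsto hu
  have hdvd : X ^ n ∣ C 1 - a * (trunc n a⁻¹ : 𝕜⟦X⟧) := by
    rw [map_one, ← PowerSeries.mul_inv_cancel a ha, ← mul_sub]
    exact (X_pow_dvd_sub_trunc n a⁻¹).mul_left a
  -- `f⁻¹ - q = f⁻¹ (1 - f q)`, and `1 - f q` inherits its order from the formal defect `1 - a q`.
  have hdefect := ((const hu 1).sub (hf.mul hu (polynomial_eval hu _))).isBigO_of_X_pow_dvd hdvd
  have h := ((hf0.inv₀ ha).isBigO_one 𝕜).mul hdefect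
  simp only [one_mul] at h
  refine h.congr' ?_ EventuallyEq.rfl
  filter_upwards [hf0.eventually_ne ha] with x hx
  field_simp

lemma div_gauge (hu0 : ∀ᶠ x in l, u x ≠ 0) (hf : HasExpansion l u f (X * a)) :
    HasExpansion l u (fun x => f x / u x) a := fun n => by
  have htrunc : trunc (n + 1) (X * a) = Polynomial.X * trunc n a := by
    ext (_ | k) <;> simp [PowerSeries.coeff_trunc, PowerSeries.coeff_succ_X_mul]
  have h := (hf (n + 1)).mul (isBigO_refl (fun x => (u x)⁻¹) l)
  refine h.congr' ?_ ?_
  · filter_upwards [hu0] with x hx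
    rw [htrunc, Polynomial.eval_mul, Polynomial.eval_X]
    field_simp
  · filter_upwards [hu0] with x hx
    rw [pow_succ, mul_inv_cancel_right₀ hx]

end HasExpansion

/-- The square root, with constant coefficient `1`, of a power series with constant coefficient `1`:
the binomial series of exponent `1 / 2` evaluated at `a - 1`. -/
noncomputable def sqrtSeries (a : ℝ⟦X⟧) : ℝ⟦X⟧ :=
  (PowerSeries.binomialSeries ℝ (1 / 2 : ℝ)).subst (a - 1)

section Sqrt

variable {a : ℝ⟦X⟧}

lemma sqrtSeries_sq (ha : constantCoeff a = 1) : sqrtSeries a ^ 2 = a := by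
  have hs : PowerSeries.HasSubst (a - 1) := .of_constantCoeff_zero' (by simp [ha])
  have hhalf : PowerSeries.binomialSeries ℝ (1 / 2 : ℝ) ^ 2 = 1 + X := by
    rw [sq, ← PowerSeries.binomialSeries_add, add_halves]
    simpa using PowerSeries.binomialSeries_nat (R := ℝ) (A := ℝ) 1
  rw [sqrtSeries, ← PowerSeries.subst_pow hs, hhalf, PowerSeries.subst_add hs,
    PowerSeries.subst_X hs, ← map_one C, PowerSeries.subst_C]
  simp

lemma constantCoeff_sqrtSeries (ha : constantCoeff a = 1) : constantCoeff (sqrtSeries a) = 1 := by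
  have ha' : constantCoeff (a - 1) = 0 := by simp [ha]
  have hroot : sqrtSeries a = 1 + (PowerSeries.binomialSeries ℝ (1 / 2 : ℝ) - 1).subst (a - 1) := by
    rw [PowerSeries.subst_sub (.of_constantCoeff_zero' ha'), ← map_one C, PowerSeries.subst_C]
    simp [sqrtSeries]
  have h : constantCoeff ((PowerSeries.binomialSeries ℝ (1 / 2 : ℝ) - 1).subst (a - 1)) = 0 :=
    PowerSeries.constantCoeff_subst_eq_zero ha' _ (by simp)
  rw [hroot, map_add, h, map_one, add_zero]

lemma coeff_one_sqrtSeries (ha : constantCoeff a = 1) :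
    coeff 1 (sqrtSeries a) = coeff 1 a / 2 := by
  have h := congrArg (coeff 1) (sqrtSeries_sq ha)
  rw [sq, PowerSeries.coeff_one_mul, constantCoeff_sqrtSeries ha] at h
  linarith

lemma coeff_two_sqrtSeries (ha : constantCoeff a = 1) :
    coeff 2 (sqrtSeries a) = coeff 2 a / 2 - coeff 1 a ^ 2 / 8 := by
  have h := congrArg (coeff 2) (sqrtSeries_sq ha)
  rw [sq, coeff_two_mul, constantCoeff_sqrtSeries ha, coeff_one_sqrtSeries ha] at h
  linarith

end Sqrt

lemma HasExpansion.sqrt {u f : α → ℝ} {a : ℝ⟦X⟧} (hu : Tendsto u l (𝓝 0))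
    (hf : HasExpansion l u f a) (ha : constantCoeff a = 1) :
    HasExpansion l u (fun x => √(f x)) (sqrtSeries a) := fun n => by
  set p := trunc n (sqrtSeries a)
  have hp := polynomial_eval hu p
  have hf0 : Tendsto f l (𝓝 1) := ha ▸ hf.tendsto hu
  have hdvd : X ^ n ∣ a - (p : ℝ⟦X⟧) ^ 2 := by
    nth_rw 1 [← sqrtSeries_sq ha, sq_sub_sq]
    exact (X_pow_dvd_sub_trunc n (sqrtSeries a)).mul_left _
  -- `√f - p = (f - p²) / (√f + p)`, and `f - p²` inherits its order from the formal `a - p²`.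
  have hdefect := (hf.sub (hp.pow hu 2)).isBigO_of_X_pow_dvd hdvd
  have hp0 : 0 ≤ constantCoeff (p : ℝ⟦X⟧) := by
    rcases n with _ | n <;> simp [p, PowerSeries.coeff_trunc, constantCoeff_sqrtSeries ha]
  have hsum : Tendsto (fun x => √(f x) + p.eval (u x)) l (𝓝 (1 + constantCoeff (p : ℝ⟦X⟧))) := by
    simpa using hf0.sqrt.add (hp.tendsto hu)
  have hsum0 : 1 + constantCoeff (p : ℝ⟦X⟧) ≠ 0 := by positivity
  have h := ((hsum.inv₀ hsum0).isBigO_one ℝ).mul hdefect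
  simp only [one_mul] at h
  refine h.congr' ?_ EventuallyEq.rfl
  filter_upwards [hsum.eventually_ne hsum0, hf0.eventually (lt_mem_nhds one_pos)] with x hx hfx
  rw [inv_mul_eq_iff_eq_mul₀ hx, ← sq_sub_sq, Real.sq_sqrt hfx.le]

end Expansion

section SymmMean

open MeasureTheory (volume)
open PowerSeries (coeff trunc)
open scoped PowerSeries Polynomial

/-- The average of `f` over `[-ε, ε]`; each `ψ` is one. -/
noncomputable def symmMean (f : ℝ → ℝ) (ε : ℝ) : ℝ :=
  (1 / (2 * ε)) * ∫ x in (-ε)..ε, f x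

/-- The expansion in `ε ^ 2` of the average over `[-ε, ε]` of a function with expansion `a`. -/
noncomputable def symmMeanSeries (a : ℝ⟦X⟧) : ℝ⟦X⟧ :=
  .mk fun k => coeff (2 * k) a / (2 * k + 1)

lemma symmMean_add {f g : ℝ → ℝ} {ε : ℝ} (hf : IntervalIntegrable f volume (-ε) ε)
    (hg : IntervalIntegrable g volume (-ε) ε) :
    symmMean (fun x => f x + g x) ε = symmMean f ε + symmMean g ε := by
  simp only [symmMean, intervalIntegral.integral_add hf hg, mul_add]

lemma symmMean_monomial_even {ε : ℝ} (hε : ε ≠ 0) (c : ℝ) (k : ℕ) :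
    symmMean (fun x => c * x ^ (2 * k)) ε = c / (2 * k + 1) * (ε ^ 2) ^ k := by
  have hk : (2 * k + 1 : ℝ) ≠ 0 := by positivity
  simp only [symmMean, intervalIntegral.integral_const_mul, integral_pow,
    (odd_two_mul_add_one k).neg_pow]
  push_cast
  field_simp
  ring

lemma symmMean_monomial_odd (ε c : ℝ) (k : ℕ) :
    symmMean (fun x => c * x ^ (2 * k + 1)) ε = 0 := by
  simp [symmMean, show Even (2 * k + 1 + 1) from ⟨k + 1, by ring⟩, Even.neg_pow]

lemma symmMean_eval_trunc {ε : ℝ} (hε : ε ≠ 0) (a : ℝ⟦X⟧) (n : ℕ) :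
    symmMean (fun x => (trunc (2 * n) a).eval x) ε = (trunc n (symmMeanSeries a)).eval (ε ^ 2) := by
  induction n with
  | zero => simp [symmMean]
  | succ n ih =>
    have hInt (p : ℝ[X]) : IntervalIntegrable (fun x => p.eval x) volume (-ε) ε :=
      p.continuous.intervalIntegrable _ _
    have hmon (c : ℝ) (k : ℕ) : IntervalIntegrable (fun x => c * x ^ k) volume (-ε) ε :=
      Continuous.intervalIntegrable (by fun_prop) _ _
    simp only [mul_add_one, PowerSeries.trunc_succ, Polynomial.eval_add, Polynomial.eval_monomial]
    rw [symmMean_add ((hInt _).add (hmon _ _)) (hmon _ _), symmMean_add (hInt _) (hmon _ _), ih,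
      symmMean_monomial_even hε, symmMean_monomial_odd, add_zero, symmMeanSeries,
      PowerSeries.coeff_mk]

lemma isBigO_symmMean {f : ℝ → ℝ} {n : ℕ} (hf : f =O[𝓝 0] fun x => x ^ n) :
    symmMean f =O[𝓝[>] 0] fun ε => ε ^ n := by
  obtain ⟨K, hK, hbound⟩ := hf.exists_pos
  obtain ⟨δ, hδ, hball⟩ := Metric.eventually_nhds_iff.1 hbound.bound
  refine IsBigO.of_bound K ?_
  filter_upwards [Ioo_mem_nhdsGT hδ] with ε ⟨hε, hεδ⟩
  have hInt : ‖∫ x in (-ε)..ε, f x‖ ≤ K * ε ^ n * |ε - -ε| := by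
    refine intervalIntegral.norm_integral_le_of_norm_le_const fun x hx => ?_
    rw [Set.uIoc_of_le (by linarith)] at hx
    have hxε : ‖x‖ ≤ ε := abs_le.2 ⟨hx.1.le, hx.2⟩
    calc ‖f x‖ ≤ K * ‖x ^ n‖ := hball (by simpa using hxε.trans_lt hεδ)
      _ ≤ K * ε ^ n := by rw [norm_pow]; gcongr
  calc ‖symmMean f ε‖ = 1 / (2 * ε) * ‖∫ x in (-ε)..ε, f x‖ := by
        rw [symmMean, norm_mul, Real.norm_of_nonneg (by positivity)]
    _ ≤ 1 / (2 * ε) * (K * ε ^ n * |ε - -ε|) := by gcongr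
    _ = K * ‖ε ^ n‖ := by
        rw [Real.norm_of_nonneg (by positivity), sub_neg_eq_add, ← two_mul,
          abs_of_pos (by positivity)]
        field_simp

lemma hasExpansion_symmMean {f : ℝ → ℝ} {a : ℝ⟦X⟧} (hf : HasExpansion (𝓝 0) id f a)
    (hInt : ∀ᶠ ε in 𝓝[>] 0, IntervalIntegrable f volume (-ε) ε) :
    HasExpansion (𝓝[>] 0) (fun ε => ε ^ 2) (symmMean f) (symmMeanSeries a) := fun n => by
  have hrem := isBigO_symmMean (hf (2 * n))
  simp only [pow_mul] at hrem
  refine hrem.congr' ?_ EventuallyEq.rfl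
  filter_upwards [hInt, self_mem_nhdsWithin] with ε hf hε
  have hp : IntervalIntegrable (fun x => (trunc (2 * n) a).eval x) volume (-ε) ε :=
    (trunc (2 * n) a).continuous.intervalIntegrable _ _
  rw [← symmMean_eval_trunc (ne_of_gt hε)]
  simp only [symmMean, id, intervalIntegral.integral_sub hf hp, mul_sub]

end SymmMean

section Gegenbauer

open PowerSeries (X C coeff constantCoeff)
open scoped PowerSeries

variable {𝕜 : Type*} [Field 𝕜]

/-- The generating series `(1 - 2 s X + X²)⁻ᵏ = ∑ Cₙ⁽ᵏ⁾(s) Xⁿ` of the Gegenbauer polynomials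
`Cₙ⁽ᵏ⁾`. -/
noncomputable def gegenbauerSeries (k : ℕ) (s : 𝕜) : 𝕜⟦X⟧ :=
  ((1 - C (2 * s) * X + X ^ 2) ^ k)⁻¹

lemma gegenbauerSeries_zero (s : 𝕜) : gegenbauerSeries 0 s = 1 := by
  rw [gegenbauerSeries, pow_zero, PowerSeries.inv_eq_iff_mul_eq_one] <;> simp

lemma mul_gegenbauerSeries_succ (k : ℕ) (s : 𝕜) :
    (1 - C (2 * s) * X + X ^ 2) * gegenbauerSeries (k + 1) s = gegenbauerSeries k s := by
  rw [gegenbauerSeries, gegenbauerSeries, pow_succ _ k, PowerSeries.mul_inv_rev, ← mul_assoc,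
    PowerSeries.mul_inv_cancel _ (by simp), one_mul]

lemma constantCoeff_gegenbauerSeries (k : ℕ) (s : 𝕜) :
    constantCoeff (gegenbauerSeries k s) = 1 := by
  simp [gegenbauerSeries]

lemma coeff_one_gegenbauerSeries_succ (k : ℕ) (s : 𝕜) :
    coeff 1 (gegenbauerSeries (k + 1) s) = 2 * s + coeff 1 (gegenbauerSeries k s) := by
  have h := congrArg (coeff 1) (mul_gegenbauerSeries_succ k s)
  have hbase₀ : constantCoeff (1 - C (2 * s) * X + X ^ 2) = 1 := by simp
  have hbase₁ : coeff 1 (1 - C (2 * s) * X + X ^ 2) = -(2 * s) := by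
    simp [PowerSeries.coeff_X_pow, PowerSeries.coeff_one]
  rw [PowerSeries.coeff_one_mul, hbase₀, hbase₁, constantCoeff_gegenbauerSeries] at h
  linear_combination h

lemma coeff_gegenbauerSeries_succ_add_two (k n : ℕ) (s : 𝕜) :
    coeff (n + 2) (gegenbauerSeries (k + 1) s) =
      2 * s * coeff (n + 1) (gegenbauerSeries (k + 1) s) - coeff n (gegenbauerSeries (k + 1) s) +
        coeff (n + 2) (gegenbauerSeries k s) := by
  have h := congrArg (coeff (n + 2)) (mul_gegenbauerSeries_succ k s)
  rw [add_mul, sub_mul, mul_assoc (C _), one_mul, map_add, map_sub, PowerSeries.coeff_C_mul,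
    PowerSeries.coeff_succ_X_mul, PowerSeries.coeff_X_pow_mul] at h
  linear_combination h

end Gegenbauer

section Kernel

open PowerSeries (X)

variable {s c : ℝ}

lemma hasExpansion_kernel_inv_pow (h : s ^ 2 + c ^ 2 = 1) (k : ℕ) :
    HasExpansion (𝓝 0) id (fun x => (((x - s) ^ 2 + c ^ 2) ^ k)⁻¹) (gegenbauerSeries k s) := by
  have hid : Tendsto (id : ℝ → ℝ) (𝓝 0) (𝓝 0) := tendsto_id
  have hX : HasExpansion (𝓝 0) id (fun x : ℝ => x) X := .gauge hid
  have hkernel := ((HasExpansion.const hid 1).sub (hX.const_mul (2 * s))).add (hX.pow hid 2)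
  have hinv := (hkernel.pow hid k).inv hid (by simp)
  rw [map_one] at hinv
  refine hinv.congr' (.of_forall fun x => ?_)
  beta_reduce
  rw [show (x - s) ^ 2 + c ^ 2 = 1 - 2 * s * x + x ^ 2 by linear_combination h]

lemma continuous_kernel_inv_pow (hc : c ≠ 0) (k : ℕ) :
    Continuous fun x => (((x - s) ^ 2 + c ^ 2) ^ k)⁻¹ :=
  Continuous.inv₀ (by fun_prop) fun x => by positivity

end Kernel

section Psi

open PowerSeries (X C coeff constantCoeff)
open scoped PowerSeries

/-- The expansion of `ψ₂ₖ` in `ε ^ 2`, as a function of `s = sin θ`. -/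
noncomputable def psiSeries (k : ℕ) (s : ℝ) : ℝ⟦X⟧ :=
  symmMeanSeries (gegenbauerSeries k s)

/-- The expansion of `ψ̄₅` in `ε ^ 2`, as a function of `s = sin θ`. -/
noncomputable def psiBarSeries (s : ℝ) : ℝ⟦X⟧ :=
  symmMeanSeries ((X - C s) * gegenbauerSeries 3 s)

lemma tendsto_sq_nhdsGT_zero : Tendsto (fun ε : ℝ => ε ^ 2) (𝓝[>] 0) (𝓝 0) := by
  simpa using (tendsto_id.mono_left nhdsWithin_le_nhds : Tendsto id (𝓝[>] (0 : ℝ)) (𝓝 0)).pow 2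

variable {θ : ℝ}

lemma hasExpansion_psi (hθ : cos θ ≠ 0) (k : ℕ) :
    HasExpansion (𝓝[>] 0) (fun ε => ε ^ 2)
      (symmMean fun x => (((x - sin θ) ^ 2 + cos θ ^ 2) ^ k)⁻¹) (psiSeries k (sin θ)) :=
  hasExpansion_symmMean (hasExpansion_kernel_inv_pow (sin_sq_add_cos_sq θ) k)
    (.of_forall fun _ => (continuous_kernel_inv_pow hθ k).intervalIntegrable _ _)

lemma hasExpansion_ψ₂ (hθ : cos θ ≠ 0) :
    HasExpansion (𝓝[>] 0) (fun ε => ε ^ 2) (ψ₂ θ) (psiSeries 1 (sin θ)) := by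
  simpa only [pow_one] using! hasExpansion_psi hθ 1

lemma hasExpansion_ψ₄ (hθ : cos θ ≠ 0) :
    HasExpansion (𝓝[>] 0) (fun ε => ε ^ 2) (ψ₄ θ) (psiSeries 2 (sin θ)) :=
  hasExpansion_psi hθ 2

lemma hasExpansion_ψ₆ (hθ : cos θ ≠ 0) :
    HasExpansion (𝓝[>] 0) (fun ε => ε ^ 2) (ψ₆ θ) (psiSeries 3 (sin θ)) :=
  hasExpansion_psi hθ 3

lemma hasExpansion_ψ₅' (hθ : cos θ ≠ 0) :
    HasExpansion (𝓝[>] 0) (fun ε => ε ^ 2) (ψ₅' θ) (psiBarSeries (sin θ)) := by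
  have hid : Tendsto (id : ℝ → ℝ) (𝓝 0) (𝓝 0) := tendsto_id
  have hshift : HasExpansion (𝓝 0) id (fun x => x - sin θ) (X - C (sin θ)) :=
    (HasExpansion.gauge hid).sub (.const hid _)
  refine hasExpansion_symmMean
    (hshift.mul hid (hasExpansion_kernel_inv_pow (sin_sq_add_cos_sq θ) 3)) (.of_forall fun _ => ?_)
  exact ((continuous_id.sub continuous_const).mul
    (continuous_kernel_inv_pow hθ 3)).intervalIntegrable _ _

lemma coeff_psiSeries (n k : ℕ) (s : ℝ) :
    coeff n (psiSeries k s) = coeff (2 * n) (gegenbauerSeries k s) / (2 * n + 1) := by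
  rw [psiSeries, symmMeanSeries, PowerSeries.coeff_mk]

lemma coeff_succ_psiBarSeries (n : ℕ) (s : ℝ) :
    coeff (n + 1) (psiBarSeries s) =
      (coeff (2 * n + 1) (gegenbauerSeries 3 s) - s * coeff (2 * n + 2) (gegenbauerSeries 3 s)) /
        (2 * n + 3) := by
  rw [psiBarSeries, symmMeanSeries, PowerSeries.coeff_mk, sub_mul, map_sub, PowerSeries.coeff_C_mul,
    mul_add_one, PowerSeries.coeff_succ_X_mul]
  push_cast
  ring

lemma constantCoeff_psiSeries (k : ℕ) (s : ℝ) : constantCoeff (psiSeries k s) = 1 := by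
  simp [psiSeries, symmMeanSeries, constantCoeff_gegenbauerSeries]

lemma constantCoeff_psiBarSeries (s : ℝ) : constantCoeff (psiBarSeries s) = -s := by
  simp [psiBarSeries, symmMeanSeries, constantCoeff_gegenbauerSeries]

lemma coeff_one_psiSeries_one (s : ℝ) : coeff 1 (psiSeries 1 s) = (4 * s ^ 2 - 1) / 3 := by
  simp only [coeff_psiSeries, Nat.reduceMul, Nat.cast_one, coeff_gegenbauerSeries_succ_add_two,
    coeff_one_gegenbauerSeries_succ, gegenbauerSeries_zero, zero_add, PowerSeries.coeff_one,
    OfNat.ofNat_ne_zero, one_ne_zero, if_false, PowerSeries.coeff_zero_eq_constantCoeff_apply,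
    constantCoeff_gegenbauerSeries]
  ring

lemma coeffs_psiSeries_two (s : ℝ) :
    coeff 1 (psiSeries 2 s) = (12 * s ^ 2 - 2) / 3 ∧
      coeff 2 (psiSeries 2 s) = (80 * s ^ 4 - 48 * s ^ 2 + 3) / 5 ∧
      coeff 3 (psiSeries 2 s) = (448 * s ^ 6 - 480 * s ^ 4 + 120 * s ^ 2 - 4) / 7 := by
  simp only [coeff_psiSeries, Nat.reduceMul, Nat.cast_one, Nat.cast_ofNat,
    coeff_gegenbauerSeries_succ_add_two, coeff_one_gegenbauerSeries_succ, gegenbauerSeries_zero,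
    zero_add, Nat.reduceAdd, PowerSeries.coeff_one, OfNat.ofNat_ne_zero, one_ne_zero, if_false,
    PowerSeries.coeff_zero_eq_constantCoeff_apply, constantCoeff_gegenbauerSeries]
  refine ⟨?_, ?_, ?_⟩ <;> ring

lemma coeffs_psiSeries_three (s : ℝ) :
    coeff 1 (psiSeries 3 s) = 8 * s ^ 2 - 1 ∧
      coeff 2 (psiSeries 3 s) = (240 * s ^ 4 - 120 * s ^ 2 + 6) / 5 ∧
      coeff 3 (psiSeries 3 s) = (1792 * s ^ 6 - 1680 * s ^ 4 + 360 * s ^ 2 - 10) / 7 := by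
  simp only [coeff_psiSeries, Nat.reduceMul, Nat.cast_one, Nat.cast_ofNat,
    coeff_gegenbauerSeries_succ_add_two, coeff_one_gegenbauerSeries_succ, gegenbauerSeries_zero,
    zero_add, Nat.reduceAdd, PowerSeries.coeff_one, OfNat.ofNat_ne_zero, one_ne_zero, if_false,
    PowerSeries.coeff_zero_eq_constantCoeff_apply, constantCoeff_gegenbauerSeries]
  refine ⟨?_, ?_, ?_⟩ <;> ring

lemma coeffs_psiBarSeries (s : ℝ) :
    coeff 1 (psiBarSeries s) = -8 * s ^ 3 + 3 * s ∧
      coeff 2 (psiBarSeries s) = -48 * s ^ 5 + 40 * s ^ 3 - 6 * s ∧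
      coeff 3 (psiBarSeries s) = -256 * s ^ 7 + 336 * s ^ 5 - 120 * s ^ 3 + 10 * s := by
  have h₁ := coeff_succ_psiBarSeries 0 s
  have h₂ := coeff_succ_psiBarSeries 1 s
  have h₃ := coeff_succ_psiBarSeries 2 s
  simp only [Nat.reduceMul, Nat.cast_zero, Nat.cast_one, Nat.cast_ofNat, mul_zero,
    coeff_gegenbauerSeries_succ_add_two, coeff_one_gegenbauerSeries_succ, gegenbauerSeries_zero,
    zero_add, Nat.reduceAdd, PowerSeries.coeff_one, OfNat.ofNat_ne_zero, one_ne_zero, if_false,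
    PowerSeries.coeff_zero_eq_constantCoeff_apply, constantCoeff_gegenbauerSeries] at h₁ h₂ h₃
  refine ⟨?_, ?_, ?_⟩
  · rw [h₁]; ring
  · rw [h₂]; ring
  · rw [h₃]; ring

end Psi

section Threshold

open PowerSeries (X C coeff constantCoeff)
open scoped PowerSeries

/-- The expansion in `ε ^ 2` of `(ψ₄ - 2 cos² θ ψ₆)² + 4 cos² θ ψ̄₅²`, as a function of
`s = sin θ`. -/
noncomputable def radicandSeries (s : ℝ) : ℝ⟦X⟧ :=
  (psiSeries 2 s - C (2 * (1 - s ^ 2)) * psiSeries 3 s) ^ 2 +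
    C (4 * (1 - s ^ 2)) * psiBarSeries s ^ 2

/-- The expansion in `ε ^ 2` of the numerator `ψ₄ + 3 √(⋯)` of `S`, without its factor `ψ₂`, as a
function of `s = sin θ`. -/
noncomputable def numeratorSeries (s : ℝ) : ℝ⟦X⟧ :=
  psiSeries 2 s + C 3 * sqrtSeries (radicandSeries s)

/-- The expansion in `ε ^ 2` of `ψ₆ (ψ₄ - cos² θ ψ₆) - ψ̄₅²`, as a function of `s = sin θ`. -/
noncomputable def denominatorSeries (s : ℝ) : ℝ⟦X⟧ :=
  psiSeries 3 s * (psiSeries 2 s - C (1 - s ^ 2) * psiSeries 3 s) - psiBarSeries s ^ 2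

/-- The quotient of `denominatorSeries s` by `X`: the denominator of `S` vanishes to order `ε ^ 2`,
which is what makes `G` of order `ε⁻⁴`. -/
noncomputable def reducedDenominatorSeries (s : ℝ) : ℝ⟦X⟧ :=
  .mk fun n => coeff (n + 1) (denominatorSeries s)

/-- The expansion in `ε ^ 2` of `ε ^ 4 * G ε`, as a function of `s = sin θ`. -/
noncomputable def thresholdSeries (s : ℝ) : ℝ⟦X⟧ :=
  C (π / 4) * (C (2 * (1 - s ^ 2) ^ 2)⁻¹ * (numeratorSeries s * (reducedDenominatorSeries s)⁻¹) -
    X * (psiSeries 1 s)⁻¹)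

lemma constantCoeff_radicandSeries (s : ℝ) : constantCoeff (radicandSeries s) = 1 := by
  simp only [radicandSeries, map_add, map_sub, map_mul, map_pow, PowerSeries.constantCoeff_C,
    constantCoeff_psiSeries, constantCoeff_psiBarSeries]
  ring

lemma coeffs_radicandSeries (s : ℝ) :
    coeff 1 (radicandSeries s) = (28 * s ^ 2 - 8) / 3 ∧
      coeff 2 (radicandSeries s) = (2784 * s ^ 4 - 1896 * s ^ 2 + 242) / 45 := by
  obtain ⟨h₁, h₂, -⟩ := coeffs_psiSeries_two s
  obtain ⟨h₁', h₂', -⟩ := coeffs_psiSeries_three s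
  obtain ⟨k₁, k₂, -⟩ := coeffs_psiBarSeries s
  constructor <;>
  · simp only [radicandSeries, sq (_ - _ : ℝ⟦X⟧), sq (psiBarSeries s), map_add, map_sub,
      PowerSeries.coeff_one_mul, coeff_two_mul, map_mul, PowerSeries.coeff_C, one_ne_zero,
      OfNat.ofNat_ne_zero, if_false, PowerSeries.constantCoeff_C, constantCoeff_psiSeries,
      constantCoeff_psiBarSeries, h₁, h₂, h₁', h₂', k₁, k₂]
    ring

lemma coeffs_numeratorSeries (s : ℝ) :
    constantCoeff (numeratorSeries s) = 4 ∧
      coeff 1 (numeratorSeries s) = (54 * s ^ 2 - 14) / 3 ∧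
      coeff 2 (numeratorSeries s) = (1142 * s ^ 4 - 812 * s ^ 2 + 90) / 15 := by
  have h₀ := constantCoeff_radicandSeries s
  obtain ⟨h₁, h₂⟩ := coeffs_radicandSeries s
  obtain ⟨k₁, k₂, -⟩ := coeffs_psiSeries_two s
  simp only [numeratorSeries, map_add, map_mul, PowerSeries.coeff_C_mul,
    PowerSeries.constantCoeff_C, constantCoeff_psiSeries, constantCoeff_sqrtSeries h₀,
    coeff_one_sqrtSeries h₀, coeff_two_sqrtSeries h₀, h₁, h₂, k₁, k₂]
  refine ⟨?_, ?_, ?_⟩ <;> ring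

lemma coeffs_denominatorSeries (s : ℝ) :
    constantCoeff (denominatorSeries s) = 0 ∧
      coeff 1 (denominatorSeries s) = 1 / 3 ∧
      coeff 2 (denominatorSeries s) = (52 * s ^ 2 - 14) / 15 ∧
      coeff 3 (denominatorSeries s) = (864 * s ^ 4 - 544 * s ^ 2 + 65) / 35 := by
  obtain ⟨h₁, h₂, h₃⟩ := coeffs_psiSeries_two s
  obtain ⟨h₁', h₂', h₃'⟩ := coeffs_psiSeries_three s
  obtain ⟨k₁, k₂, k₃⟩ := coeffs_psiBarSeries s
  refine ⟨?_, ?_, ?_, ?_⟩ <;>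
  · simp only [denominatorSeries, sq (psiBarSeries s), map_sub, map_mul,
      PowerSeries.coeff_one_mul, coeff_two_mul, coeff_three_mul, PowerSeries.coeff_C, one_ne_zero,
      OfNat.ofNat_ne_zero, if_false, PowerSeries.constantCoeff_C, constantCoeff_psiSeries,
      constantCoeff_psiBarSeries, h₁, h₂, h₃, h₁', h₂', h₃', k₁, k₂, k₃]
    ring

lemma X_mul_reducedDenominatorSeries (s : ℝ) :
    X * reducedDenominatorSeries s = denominatorSeries s := by
  rw [reducedDenominatorSeries, ← PowerSeries.sub_const_eq_X_mul_shift,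
    (coeffs_denominatorSeries s).1, map_zero, sub_zero]

lemma coeffs_reducedDenominatorSeries (s : ℝ) :
    constantCoeff (reducedDenominatorSeries s) = 1 / 3 ∧
      coeff 1 (reducedDenominatorSeries s) = (52 * s ^ 2 - 14) / 15 ∧
      coeff 2 (reducedDenominatorSeries s) = (864 * s ^ 4 - 544 * s ^ 2 + 65) / 35 := by
  simpa only [reducedDenominatorSeries, PowerSeries.coeff_mk,
    ← PowerSeries.coeff_zero_eq_constantCoeff_apply] using (coeffs_denominatorSeries s).2

lemma coeffs_thresholdSeries {s c : ℝ} (h : s ^ 2 + c ^ 2 = 1) (hc : c ≠ 0) :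
    constantCoeff (thresholdSeries s) = 3 * π / (2 * c ^ 4) ∧
      coeff 1 (thresholdSeries s) =
        3 * π / (2 * c ^ 4) * (-2 * ((5 * c ^ 4 - 177 * c ^ 2 + 128) / 60)) ∧
      coeff 2 (thresholdSeries s) = 3 * π / (2 * c ^ 4) *
        ((-350 * c ^ 6 + 10242 * c ^ 4 - 19311 * c ^ 2 + 10122) / 1575) := by
  obtain ⟨hN₀, hN₁, hN₂⟩ := coeffs_numeratorSeries s
  obtain ⟨hD₀, hD₁, hD₂⟩ := coeffs_reducedDenominatorSeries s
  have hs : s ^ 2 = 1 - c ^ 2 := eq_sub_of_add_eq h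
  have hX₁ (a : ℝ⟦X⟧) : coeff 1 (X * a) = constantCoeff a := by simp
  have hX₂ (a : ℝ⟦X⟧) : coeff 2 (X * a) = coeff 1 a := PowerSeries.coeff_succ_X_mul 1 a
  refine ⟨?_, ?_, ?_⟩ <;>
  · simp only [thresholdSeries, map_sub, map_mul, PowerSeries.coeff_C_mul,
      PowerSeries.constantCoeff_C, PowerSeries.constantCoeff_X, hX₁, hX₂,
      PowerSeries.coeff_one_mul, coeff_two_mul, PowerSeries.constantCoeff_inv, coeff_one_inv,
      coeff_two_inv, constantCoeff_psiSeries, coeff_one_psiSeries_one, hN₀, hN₁, hN₂, hD₀, hD₁,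
      hD₂, show s ^ 4 = (s ^ 2) ^ 2 by ring, hs]
    field_simp
    ring

variable {θ : ℝ}

lemma hasExpansion_numerator (hθ : cos θ ≠ 0) :
    HasExpansion (𝓝[>] 0) (fun ε => ε ^ 2)
      (fun ε => ψ₄ θ ε + 3 * √((ψ₄ θ ε - 2 * cos θ ^ 2 * ψ₆ θ ε) ^ 2 +
        4 * cos θ ^ 2 * ψ₅' θ ε ^ 2))
      (numeratorSeries (sin θ)) := by
  have hu := tendsto_sq_nhdsGT_zero
  have hradicand := (((hasExpansion_ψ₄ hθ).sub ((hasExpansion_ψ₆ hθ).const_mul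
    (2 * (1 - sin θ ^ 2)))).pow hu 2).add
    (((hasExpansion_ψ₅' hθ).pow hu 2).const_mul (4 * (1 - sin θ ^ 2)))
  simp only [cos_sq']
  exact (hasExpansion_ψ₄ hθ).add
    ((hradicand.sqrt hu (constantCoeff_radicandSeries (sin θ))).const_mul 3)

lemma hasExpansion_denominator (hθ : cos θ ≠ 0) :
    HasExpansion (𝓝[>] 0) (fun ε => ε ^ 2)
      (fun ε => ψ₆ θ ε * (ψ₄ θ ε - cos θ ^ 2 * ψ₆ θ ε) - ψ₅' θ ε ^ 2)
      (denominatorSeries (sin θ)) := by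
  have hu := tendsto_sq_nhdsGT_zero
  simp only [cos_sq']
  exact ((hasExpansion_ψ₆ hθ).mul hu ((hasExpansion_ψ₄ hθ).sub
    ((hasExpansion_ψ₆ hθ).const_mul (1 - sin θ ^ 2)))).sub ((hasExpansion_ψ₅' hθ).pow hu 2)

lemma hasExpansion_threshold (hθ : cos θ ≠ 0) :
    HasExpansion (𝓝[>] 0) (fun ε => ε ^ 2)
      (fun ε => ε ^ 4 * (π / (4 * ψ₂ θ ε * ε ^ 2) *
        (ψ₂ θ ε * (ψ₄ θ ε + 3 * √((ψ₄ θ ε - 2 * cos θ ^ 2 * ψ₆ θ ε) ^ 2 +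
            4 * cos θ ^ 2 * ψ₅' θ ε ^ 2)) /
          (2 * cos θ ^ 4 * (ψ₆ θ ε * (ψ₄ θ ε - cos θ ^ 2 * ψ₆ θ ε) - ψ₅' θ ε ^ 2)) - 1)))
      (thresholdSeries (sin θ)) := by
  have hu := tendsto_sq_nhdsGT_zero
  have hε : ∀ᶠ ε : ℝ in 𝓝[>] 0, ε ≠ 0 := eventually_mem_nhdsWithin.mono fun _ h => ne_of_gt h
  have hψ₂ := hasExpansion_ψ₂ hθ
  have hψ₂0 : constantCoeff (psiSeries 1 (sin θ)) ≠ 0 := by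
    rw [constantCoeff_psiSeries]; exact one_ne_zero
  have hden := hasExpansion_denominator hθ
  rw [← X_mul_reducedDenominatorSeries] at hden
  have hred := hden.div_gauge (hε.mono fun _ h => pow_ne_zero 2 h)
  have hred0 : constantCoeff (reducedDenominatorSeries (sin θ)) ≠ 0 := by
    rw [(coeffs_reducedDenominatorSeries _).1]; norm_num
  have h := ((((hasExpansion_numerator hθ).mul hu (hred.inv hu hred0)).const_mul
    (2 * (1 - sin θ ^ 2) ^ 2)⁻¹).sub ((HasExpansion.gauge hu).mul hu (hψ₂.inv hu hψ₂0))).const_mul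
    (π / 4)
  refine h.congr' ?_
  filter_upwards [hε, (hψ₂.tendsto hu).eventually_ne hψ₂0,
    (hred.tendsto hu).eventually_ne hred0] with ε hε hψ₂ hred
  have hden : ψ₆ θ ε * (ψ₄ θ ε - cos θ ^ 2 * ψ₆ θ ε) - ψ₅' θ ε ^ 2 ≠ 0 := (div_ne_zero_iff.1 hred).1
  rw [← cos_sq']
  field_simp

end Threshold

theorem snr_threshold2_2x3_asymptotics (θ : ℝ) (hθ : θ ∈ Set.Ioo (-(π / 2)) (π / 2))
    (S G : ℝ → ℝ) (B₁ B₂ : ℝ)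
    (hS : ∀ ε, S ε =
      ψ₂ θ ε *
          (ψ₄ θ ε +
            3 * Real.sqrt ((ψ₄ θ ε - 2 * cos θ ^ 2 * ψ₆ θ ε) ^ 2 +
              4 * cos θ ^ 2 * ψ₅' θ ε ^ 2)) /
        (2 * cos θ ^ 4 *
          (ψ₆ θ ε * (ψ₄ θ ε - cos θ ^ 2 * ψ₆ θ ε) - ψ₅' θ ε ^ 2)) - 1)
    (hG : ∀ ε, G ε = (π / (4 * ψ₂ θ ε * ε ^ 2)) * S ε)
    (hB₁ : B₁ = (5 * cos θ ^ 4 - 177 * cos θ ^ 2 + 128) / 60)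
    (hB₂ : B₂ = (-350 * cos θ ^ 6 + 10242 * cos θ ^ 4 - 19311 * cos θ ^ 2 + 10122) / 1575) :
    (fun ε : ℝ =>
        G ε -
          (3 * π / (2 * cos θ ^ 4)) * ((ε ^ 4)⁻¹ - 2 * B₁ * (ε ^ 2)⁻¹ + B₂))
      =O[𝓝[>] (0 : ℝ)] fun ε => ε ^ 2 := by
  have hc : cos θ ≠ 0 := (cos_pos_of_mem_Ioo hθ).ne'
  have hexp : HasExpansion (𝓝[>] 0) (fun ε => ε ^ 2) (fun ε => ε ^ 4 * G ε)
      (thresholdSeries (sin θ)) := by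
    simpa only [hG, hS] using hasExpansion_threshold hc
  obtain ⟨h₀, h₁, h₂⟩ := coeffs_thresholdSeries (sin_sq_add_cos_sq θ) hc
  have hrem := (hexp 3).mul (isBigO_refl (fun ε : ℝ => (ε ^ 4)⁻¹) (𝓝[>] 0))
  have hε : ∀ᶠ ε : ℝ in 𝓝[>] 0, ε ≠ 0 := eventually_mem_nhdsWithin.mono fun _ h => ne_of_gt h
  refine hrem.congr' (hε.mono fun ε hε => ?_) (hε.mono fun ε hε => ?_)
  · simp only [PowerSeries.trunc_succ, PowerSeries.trunc_zero', zero_add, Polynomial.eval_add,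
      Polynomial.eval_monomial, PowerSeries.coeff_zero_eq_constantCoeff_apply, h₀, h₁, h₂, hB₁, hB₂]
    field_simp
    ring
  · field_simp
end

section
/- Fix θ ∈ (−π/2, π/2). Then ψ₄(ε) − [1 + 2·(5/3 − 2·cos²θ)·ε²] = O(ε⁴) as ε → 0⁺. -/
open Real Filter Asymptotics Topology

/-!
Since `sin² + cos² = 1`, the integrand of `ψ₄ θ` is `(1 - 2sx + x²)⁻²` with `s = sin θ`, whose
Taylor coefficients at `0` are the Gegenbauer polynomials `C_k^{(2)}(s)`. Averaging over `[-ε, ε]`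
kills the odd powers of `x`, turns an even power `x ^ k` into `ε ^ k / (k + 1)`, and preserves the
order of the remainder. The coefficient of `ε²` is therefore `C_2^{(2)}(s) / 3 = (12s² - 2) / 3`.
-/

section SymmetricAverage

open MeasureTheory

theorem intervalAverage_symm_pow (n : ℕ) {ε : ℝ} (hε : ε ≠ 0) :
    ⨍ x in (-ε)..ε, x ^ n = if Even n then ε ^ n / (n + 1) else 0 := by
  have hn : (n : ℝ) + 1 ≠ 0 := by positivity
  rw [interval_average_eq_div, integral_pow]
  split_ifs with h
  · rw [h.add_one.neg_pow]
    field_simp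
    ring
  · rw [(Nat.not_even_iff_odd.mp h).add_one.neg_pow, sub_self, zero_div, zero_div]

variable {E : Type*} [NormedAddCommGroup E] [NormedSpace ℝ E]

theorem norm_intervalAverage_le_of_norm_le_const {f : ℝ → E} {a b C : ℝ} (hC : 0 ≤ C)
    (hf : ∀ x ∈ Set.uIoc a b, ‖f x‖ ≤ C) : ‖⨍ x in a..b, f x‖ ≤ C := by
  rw [interval_average_eq, norm_smul, norm_inv, Real.norm_eq_abs]
  calc |b - a|⁻¹ * ‖∫ x in a..b, f x‖
    _ ≤ |b - a|⁻¹ * (C * |b - a|) := by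
      gcongr
      exact intervalIntegral.norm_integral_le_of_norm_le_const hf
    _ = C * (|b - a|⁻¹ * |b - a|) := by ring
    _ ≤ C := mul_le_of_le_one_right hC inv_mul_le_one

theorem isBigO_intervalAverage_symm {f : ℝ → E} {n : ℕ} (hf : f =O[𝓝 0] fun x ↦ x ^ n) :
    (fun ε ↦ ⨍ x in (-ε)..ε, f x) =O[𝓝 0] fun ε ↦ ε ^ n := by
  obtain ⟨C, hC, hfC⟩ := hf.exists_nonneg
  obtain ⟨δ, hδ, hball⟩ := Metric.eventually_nhds_iff.mp hfC.bound
  refine .of_bound C (Metric.eventually_nhds_iff.mpr ⟨δ, hδ, fun ε hε ↦ ?_⟩)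
  refine norm_intervalAverage_le_of_norm_le_const (by positivity) fun x hx ↦ ?_
  have hxε : |x| ≤ |ε| := by
    rcases Set.mem_uIoc.mp hx with h | h <;> grind
  rw [dist_zero_right, Real.norm_eq_abs] at hε
  calc ‖f x‖
    _ ≤ C * ‖x ^ n‖ := hball (by simpa using hxε.trans_lt hε)
    _ ≤ C * ‖ε ^ n‖ := by
      rw [norm_pow, norm_pow, Real.norm_eq_abs, Real.norm_eq_abs]
      gcongr

variable [CompleteSpace E]

theorem intervalAverage_symm_sum_pow_smul {m : ℕ} (a : Fin m → E) {ε : ℝ} (hε : ε ≠ 0) :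
    ⨍ x in (-ε)..ε, ∑ k : Fin m, x ^ (k : ℕ) • a k =
      ∑ k : Fin m, (if Even (k : ℕ) then ε ^ (k : ℕ) / (k + 1) else 0) • a k := by
  simp_rw [← intervalAverage_symm_pow _ hε, interval_average_eq]
  rw [intervalIntegral.integral_finsetSum fun k _ ↦
    (by fun_prop : Continuous fun x : ℝ ↦ x ^ k.val • a k).intervalIntegrable _ _]
  simp_rw [intervalIntegral.integral_smul_const, Finset.smul_sum, smul_assoc]

theorem isBigO_intervalAverage_symm_sub_sum {f : ℝ → E} {m n : ℕ} {a : Fin m → E}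
    (hint : ∀ᶠ ε in 𝓝 0, IntervalIntegrable f volume (-ε) ε)
    (hf : (fun x ↦ f x - ∑ k : Fin m, x ^ (k : ℕ) • a k) =O[𝓝 0] fun x ↦ x ^ n) :
    (fun ε ↦ (⨍ x in (-ε)..ε, f x) -
        ∑ k : Fin m, (if Even (k : ℕ) then ε ^ (k : ℕ) / (k + 1) else 0) • a k)
      =O[𝓝[≠] 0] fun ε ↦ ε ^ n := by
  refine ((isBigO_intervalAverage_symm hf).mono nhdsWithin_le_nhds).congr' ?_ .rfl
  filter_upwards [nhdsWithin_le_nhds hint, self_mem_nhdsWithin] with ε hfε hε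
  have hpoly : IntervalIntegrable (fun x ↦ ∑ k : Fin m, x ^ (k : ℕ) • a k) volume (-ε) ε :=
    (continuous_finsetSum _ fun _ _ ↦ by fun_prop).intervalIntegrable _ _
  rw [← intervalAverage_symm_sum_pow_smul a hε]
  simp only [interval_average_eq, intervalIntegral.integral_sub hfε hpoly, smul_sub]

end SymmetricAverage

theorem eventually_intervalIntegrable_inv_sq_quadratic (s : ℝ) :
    ∀ᶠ ε in 𝓝 (0 : ℝ), IntervalIntegrable (fun x ↦ ((1 - 2 * s * x + x ^ 2) ^ 2)⁻¹)
      MeasureTheory.volume (-ε) ε := by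
  have hcont : ContinuousAt (fun x : ℝ ↦ ((1 - 2 * s * x + x ^ 2) ^ 2)⁻¹) 0 :=
    ContinuousAt.inv₀ (by fun_prop) (by simp)
  have hmeas : Measurable fun x : ℝ ↦ ((1 - 2 * s * x + x ^ 2) ^ 2)⁻¹ := by fun_prop
  exact Tendsto.eventually_intervalIntegrable (l := 𝓝 0)
    hmeas.stronglyMeasurable.stronglyMeasurableAtFilter
    (MeasureTheory.Measure.finiteAt_nhds _ _) hcont
    (continuous_neg.tendsto' 0 0 neg_zero) tendsto_id

theorem isBigO_inv_sq_quadratic_sub_taylor (s : ℝ) :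
    (fun x ↦ ((1 - 2 * s * x + x ^ 2) ^ 2)⁻¹ -
        (1 + 4 * s * x + (12 * s ^ 2 - 2) * x ^ 2 + (32 * s ^ 3 - 12 * s) * x ^ 3))
      =O[𝓝 0] fun x ↦ x ^ 4 := by
  let q : ℝ → ℝ := fun x ↦ (1 - 2 * s * x + x ^ 2) ^ 2
  let P : ℝ → ℝ := fun x ↦
    1 + 4 * s * x + (12 * s ^ 2 - 2) * x ^ 2 + (32 * s ^ 3 - 12 * s) * x ^ 3
  let R : ℝ → ℝ := fun x ↦ 80 * s ^ 4 - 48 * s ^ 2 + 3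
    - (128 * s ^ 5 - 32 * s ^ 3 - 12 * s) * x
    + (128 * s ^ 4 - 60 * s ^ 2 + 2) * x ^ 2
    - (32 * s ^ 3 - 12 * s) * x ^ 3
  have hdivision (x : ℝ) : x ^ 4 * R x = 1 - P x * q x := by
    simp only [P, q, R]
    ring
  have hq : ContinuousAt q 0 := by fun_prop
  have hq0 : q 0 ≠ 0 := by simp [q]
  have hbounded : (fun x ↦ R x / q x) =O[𝓝 0] fun _ ↦ (1 : ℝ) :=
    (ContinuousAt.div (by fun_prop) hq hq0).tendsto.isBigO_one ℝ
  have hremainder : (fun x ↦ x ^ 4 * (R x / q x)) =O[𝓝 0] fun x ↦ x ^ 4 := by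
    simpa only [mul_one] using (isBigO_refl (fun x : ℝ ↦ x ^ 4) (𝓝 0)).mul hbounded
  refine hremainder.congr' ?_ .rfl
  filter_upwards [hq.eventually_ne hq0] with x hqx
  calc x ^ 4 * (R x / q x)
    _ = (1 - P x * q x) / q x := by rw [← hdivision, mul_div_assoc]
    _ = (q x)⁻¹ - P x := by rw [sub_div, mul_div_cancel_right₀ _ hqx, one_div]

theorem psi4_eq_intervalAverage (θ ε : ℝ) :
    ψ₄ θ ε = ⨍ x in (-ε)..ε, ((1 - 2 * sin θ * x + x ^ 2) ^ 2)⁻¹ := by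
  have hquad (x : ℝ) : (x - sin θ) ^ 2 + cos θ ^ 2 = 1 - 2 * sin θ * x + x ^ 2 := by
    linear_combination sin_sq_add_cos_sq θ
  simp only [ψ₄, hquad, interval_average_eq_div]
  ring

theorem psi4_taylor_general (θ : ℝ) :
    (fun ε : ℝ => ψ₄ θ ε - (1 + 2 * (5 / 3 - 2 * cos θ ^ 2) * ε ^ 2))
      =O[𝓝[≠] (0 : ℝ)] fun ε => ε ^ 4 := by
  let gegenbauer : Fin 4 → ℝ :=
    ![1, 4 * sin θ, 12 * sin θ ^ 2 - 2, 32 * sin θ ^ 3 - 12 * sin θ]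
  have htaylor : (fun x ↦ ((1 - 2 * sin θ * x + x ^ 2) ^ 2)⁻¹ -
      ∑ k : Fin 4, x ^ (k : ℕ) • gegenbauer k) =O[𝓝 0] fun x ↦ x ^ 4 := by
    refine (isBigO_inv_sq_quadratic_sub_taylor (sin θ)).congr_left fun x ↦ ?_
    simp [gegenbauer, Fin.sum_univ_four, mul_comm]
  have hmean (ε : ℝ) : ∑ k : Fin 4,
      (if Even (k : ℕ) then ε ^ (k : ℕ) / (k + 1) else 0) • gegenbauer k =
        1 + ε ^ 2 / (2 + 1) * (12 * sin θ ^ 2 - 2) := by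
    simp [gegenbauer, Fin.sum_univ_four, show ¬Even 3 by decide]
  refine (isBigO_intervalAverage_symm_sub_sum
    (eventually_intervalIntegrable_inv_sq_quadratic (sin θ)) htaylor).congr_left fun ε ↦ ?_
  rw [hmean, psi4_eq_intervalAverage, cos_sq']
  ring

theorem psi4_taylor (θ : ℝ) (hθ : θ ∈ Set.Ioo (-(π / 2)) (π / 2)) :
    (fun ε : ℝ => ψ₄ θ ε - (1 + 2 * (5 / 3 - 2 * cos θ ^ 2) * ε ^ 2))
      =O[𝓝[>] (0 : ℝ)] fun ε => ε ^ 4 :=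
  (psi4_taylor_general θ).mono (nhdsGT_le_nhdsNE 0)
end

section
/- Fix θ ∈ (−π/2, π/2). Then ψ̄₅(ε) − [−sin θ − (5 − 8·cos²θ)·sin θ·ε²] = O(ε⁴) as ε → 0⁺. -/
open Real Filter Asymptotics Topology

/-!
The kernel `t * ((t ^ 2 + cos θ ^ 2) ^ 3)⁻¹` is smooth near `-sin θ`, where `t ^ 2 + cos θ ^ 2 = 1`,
and `ψ₅'` averages it over the interval of radius `ε` about that point. Averaging a Taylor
polynomial over a symmetric interval kills its odd part, so a `C⁴` function `f` has average
`f a + f'' a / 6 * ε ^ 2 + O(ε ^ 4)`. At `a = -sin θ` the kernel has value `-sin θ` and second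
derivative `18 sin θ - 48 sin³ θ = -6 (5 - 8 cos² θ) sin θ`.
-/

open Finset MeasureTheory
open scoped Nat Interval

theorem sum_range_two_mul_ite_even {M : Type*} [AddCommMonoid M] (g : ℕ → M) (m : ℕ) :
    (∑ k ∈ range (2 * m), if Even k then g k else 0) = ∑ j ∈ range m, g (2 * j) := by
  induction m with
  | zero => simp
  | succ m ih =>
    rw [Nat.mul_succ, sum_range_succ, sum_range_succ, ih, sum_range_succ]
    simp

theorem eventually_intervalIntegrable_sub_add {E : Type*} [NormedAddCommGroup E] {f : ℝ → E} {a : ℝ}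
    (hf : ∀ᶠ x in 𝓝 a, ContinuousAt f x) :
    ∀ᶠ ε in 𝓝 0, IntervalIntegrable f volume (a - ε) (a + ε) := by
  obtain ⟨u, hfu, hu, ha⟩ := eventually_nhds_iff.1 hf
  have hmeas : StronglyMeasurableAtFilter f (𝓝 a) :=
    ContinuousAt.stronglyMeasurableAtFilter hu hfu a ha
  have hleft : Tendsto (fun ε ↦ a - ε) (𝓝 0) (𝓝 a) := by
    simpa using (tendsto_const_nhds (x := a)).sub (tendsto_id (α := ℝ) (x := 𝓝 0))
  have hright : Tendsto (fun ε ↦ a + ε) (𝓝 0) (𝓝 a) := by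
    simpa using (tendsto_const_nhds (x := a)).add (tendsto_id (α := ℝ) (x := 𝓝 0))
  exact (hfu a ha).tendsto.eventually_intervalIntegrable hmeas
    (volume.finiteAt_nhds a) hleft hright

section SymmetricAverage

variable {E : Type*} [NormedAddCommGroup E] [NormedSpace ℝ E] {f : ℝ → E} {a : ℝ}

theorem taylor_isBigO_of_contDiffAt {n : ℕ} (hf : ContDiffAt ℝ n f a) :
    (fun x ↦ f x - ∑ k ∈ range n, (x - a) ^ k • (k ! : ℝ)⁻¹ • iteratedDeriv k f a)
      =O[𝓝 a] fun x ↦ (x - a) ^ n := by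
  obtain ⟨u, hu, hfu⟩ := hf.contDiffOn le_rfl (by simp)
  obtain ⟨r, hr, hru⟩ := Metric.mem_nhds_iff.1 (by simpa using hu)
  have ha : a ∈ Metric.ball a r := Metric.mem_ball_self hr
  have hremainder := taylor_isLittleO (convex_ball a r) ha (hfu.mono hru)
  rw [Metric.isOpen_ball.nhdsWithin_eq ha] at hremainder
  have htop : (fun x ↦ (x - a) ^ n • (n ! : ℝ)⁻¹ • iteratedDeriv n f a) =O[𝓝 a]
      fun x ↦ (x - a) ^ n :=
    .of_bound ‖(n ! : ℝ)⁻¹ • iteratedDeriv n f a‖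
      (.of_forall fun x ↦ (norm_smul _ _).trans_le (mul_comm _ _).le)
  refine (hremainder.isBigO.add htop).congr_left fun x ↦ ?_
  simp only [taylor_within_apply, sum_range_succ,
    iteratedDerivWithin_of_isOpen Metric.isOpen_ball ha, mul_comm _ ((x - a) ^ _), mul_smul]
  abel

theorem intervalAverage_isBigO_pow {n : ℕ} (hf : f =O[𝓝 a] fun x ↦ (x - a) ^ n) :
    (fun ε ↦ ⨍ x in (a - ε)..(a + ε), f x) =O[𝓝 0] fun ε ↦ ε ^ n := by
  obtain ⟨C, hC, hfC⟩ := hf.exists_nonneg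
  obtain ⟨r, hr, hball⟩ := Metric.eventually_nhds_iff.1 hfC.bound
  refine .of_bound C (Metric.eventually_nhds_iff.2 ⟨r, hr, fun ε hε ↦ ?_⟩)
  rw [Real.dist_0_eq_abs] at hε
  have hbound : ∀ x ∈ Ι (a - ε) (a + ε), ‖f x‖ ≤ C * ‖ε ^ n‖ := fun x hx ↦ by
    have hxa : |x - a| ≤ |ε| := by
      rcases Set.mem_uIoc.1 hx with h | h <;> grind
    calc ‖f x‖ ≤ C * ‖(x - a) ^ n‖ := hball (hxa.trans_lt hε)
      _ ≤ C * ‖ε ^ n‖ := by simp only [norm_pow, Real.norm_eq_abs]; gcongr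
  rw [interval_average_eq, norm_smul, norm_inv, Real.norm_eq_abs]
  exact inv_mul_le_of_le_mul₀ (abs_nonneg _) (by positivity)
    ((intervalIntegral.norm_integral_le_of_norm_le_const hbound).trans_eq (mul_comm _ _))

theorem intervalAverage_sub_pow (k : ℕ) (a : ℝ) {ε : ℝ} (hε : ε ≠ 0) :
    ⨍ x in (a - ε)..(a + ε), (x - a) ^ k = if Even k then ε ^ k / (k + 1) else 0 := by
  have hlength : a + ε - (a - ε) = 2 * ε := by ring
  rw [interval_average_eq_div, intervalIntegral.integral_comp_sub_right (· ^ k), integral_pow,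
    hlength, sub_sub_cancel_left, add_sub_cancel_left]
  split_ifs with hk
  · rw [hk.add_one.neg_pow, pow_succ]
    field_simp
    ring
  · rw [(Nat.not_even_iff_odd.1 hk).add_one.neg_pow, sub_self, zero_div, zero_div]

variable [CompleteSpace E]

theorem intervalAverage_sum_sub_pow_smul (c : ℕ → E) (m : ℕ) (a : ℝ) {ε : ℝ} (hε : ε ≠ 0) :
    ⨍ x in (a - ε)..(a + ε), ∑ k ∈ range (2 * m), (x - a) ^ k • c k =
      ∑ j ∈ range m, (ε ^ (2 * j) / (2 * j + 1)) • c (2 * j) := by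
  have hterm (k : ℕ) : ⨍ x in (a - ε)..(a + ε), (x - a) ^ k • c k =
      (if Even k then ε ^ k / (k + 1) else 0) • c k := by
    rw [← intervalAverage_sub_pow k a hε, interval_average_eq,
      intervalIntegral.integral_smul_const, interval_average_eq, smul_assoc]
  calc ⨍ x in (a - ε)..(a + ε), ∑ k ∈ range (2 * m), (x - a) ^ k • c k
      = ∑ k ∈ range (2 * m), ⨍ x in (a - ε)..(a + ε), (x - a) ^ k • c k := by
        simp only [interval_average_eq, ← smul_sum]
        rw [intervalIntegral.integral_finsetSum fun k _ ↦
          Continuous.intervalIntegrable (by fun_prop) _ _]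
    _ = ∑ k ∈ range (2 * m), if Even k then (ε ^ k / (k + 1)) • c k else 0 := by
        simp only [hterm, ite_smul, zero_smul]
    _ = ∑ j ∈ range m, (ε ^ (2 * j) / (2 * j + 1)) • c (2 * j) := by
        rw [sum_range_two_mul_ite_even fun k ↦ (ε ^ k / (k + 1)) • c k]
        simp only [Nat.cast_mul, Nat.cast_ofNat]

-- The neighbourhood is punctured because `⨍ x in a..a, f x` is `0`, not `f a`.
theorem intervalAverage_sub_taylor_isBigO {m : ℕ} (hf : ContDiffAt ℝ (2 * m : ℕ) f a) :
    (fun ε ↦ (⨍ x in (a - ε)..(a + ε), f x) -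
        ∑ j ∈ range m, (ε ^ (2 * j) / (2 * j + 1)!) • iteratedDeriv (2 * j) f a)
      =O[𝓝[≠] 0] fun ε ↦ ε ^ (2 * m) := by
  have hremainder := (intervalAverage_isBigO_pow (taylor_isBigO_of_contDiffAt hf)).mono
    (nhdsWithin_le_nhds (s := {0}ᶜ))
  refine hremainder.congr' ?_ .rfl
  have hcont : ∀ᶠ x in 𝓝 a, ContinuousAt f x :=
    (hf.eventually (ENat.natCast_ne_coe_top _)).mono fun _ hx ↦ hx.continuousAt
  filter_upwards [(eventually_intervalIntegrable_sub_add hcont).filter_mono nhdsWithin_le_nhds,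
    self_mem_nhdsWithin] with ε hint hε
  have hfactorial (j : ℕ) : ε ^ (2 * j) / (2 * j + 1)! =
      ε ^ (2 * j) / (2 * j + 1) * ((2 * j)! : ℝ)⁻¹ := by
    rw [Nat.factorial_succ, ← div_eq_mul_inv, div_div]
    push_cast
    rfl
  simp only [hfactorial, mul_smul]
  rw [← intervalAverage_sum_sub_pow_smul (fun k ↦ (k ! : ℝ)⁻¹ • iteratedDeriv k f a) m a hε]
  simp only [interval_average_eq]
  rw [intervalIntegral.integral_sub hint (Continuous.intervalIntegrable (by fun_prop) _ _),
    smul_sub]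

end SymmetricAverage

section Kernel

variable {𝕜 : Type*} [NontriviallyNormedField 𝕜] {c t : 𝕜}

theorem hasDerivAt_pow_mul_inv_sq_add_pow (m n : ℕ) (ht : t ^ 2 + c ≠ 0) :
    HasDerivAt (fun t : 𝕜 ↦ t ^ m * ((t ^ 2 + c) ^ n)⁻¹)
      (m * t ^ (m - 1) * ((t ^ 2 + c) ^ n)⁻¹ -
        2 * n * t ^ (m + 1) * ((t ^ 2 + c) ^ (n + 1))⁻¹) t := by
  have hq : HasDerivAt (fun t : 𝕜 ↦ t ^ 2 + c) (2 * t) t := by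
    simpa using (hasDerivAt_pow 2 t).add_const c
  refine ((hasDerivAt_pow m t).mul ((hq.pow n).inv (pow_ne_zero n ht))).congr_deriv ?_
  cases n with
  | zero => simp
  | succ n =>
    simp only [Pi.pow_apply, Pi.inv_apply, Nat.add_sub_cancel]
    field_simp
    ring

theorem iteratedDeriv_two_mul_inv_sq_add_pow (n : ℕ) (ht : t ^ 2 + c ≠ 0) :
    iteratedDeriv 2 (fun t ↦ t * ((t ^ 2 + c) ^ n)⁻¹) t =
      4 * n * (n + 1) * t ^ 3 * ((t ^ 2 + c) ^ (n + 2))⁻¹ -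
        6 * n * t * ((t ^ 2 + c) ^ (n + 1))⁻¹ := by
  have hderiv : deriv (fun t ↦ t * ((t ^ 2 + c) ^ n)⁻¹) =ᶠ[𝓝 t] fun t ↦
      t ^ 0 * ((t ^ 2 + c) ^ n)⁻¹ - 2 * n * (t ^ 2 * ((t ^ 2 + c) ^ (n + 1))⁻¹) := by
    filter_upwards [(by fun_prop : ContinuousAt (fun t ↦ t ^ 2 + c) t).eventually_ne ht] with u hu
    simpa [mul_assoc] using (hasDerivAt_pow_mul_inv_sq_add_pow 1 n hu).deriv
  rw [iteratedDeriv_succ, iteratedDeriv_one, hderiv.deriv_eq,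
    ((hasDerivAt_pow_mul_inv_sq_add_pow 0 n ht).fun_sub
      ((hasDerivAt_pow_mul_inv_sq_add_pow 2 (n + 1) ht).const_mul (2 * n : 𝕜))).deriv]
  push_cast
  ring

end Kernel

theorem ψ₅'_eq_intervalAverage (θ ε : ℝ) :
    ψ₅' θ ε = ⨍ t in (-sin θ - ε)..(-sin θ + ε), t * ((t ^ 2 + cos θ ^ 2) ^ 3)⁻¹ := by
  rw [ψ₅', intervalIntegral.integral_comp_sub_right fun t ↦ t * ((t ^ 2 + cos θ ^ 2) ^ 3)⁻¹,
    interval_average_eq, smul_eq_mul, one_div]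
  congr 2 <;> ring_nf

theorem psi5bar_taylor_general (θ : ℝ) :
    (fun ε : ℝ ↦ ψ₅' θ ε - (-sin θ - (5 - 8 * cos θ ^ 2) * sin θ * ε ^ 2))
      =O[𝓝[≠] (0 : ℝ)] fun ε ↦ ε ^ 4 := by
  have hone : (-sin θ) ^ 2 + cos θ ^ 2 = 1 := by rw [neg_sq, sin_sq_add_cos_sq]
  have hne : (-sin θ) ^ 2 + cos θ ^ 2 ≠ 0 := hone ▸ one_ne_zero
  have hsmooth : ContDiffAt ℝ (2 * 2 : ℕ) (fun t ↦ t * ((t ^ 2 + cos θ ^ 2) ^ 3)⁻¹) (-sin θ) := by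
    fun_prop (disch := exact pow_ne_zero 3 hne)
  have hsecond := iteratedDeriv_two_mul_inv_sq_add_pow 3 hne
  refine (intervalAverage_sub_taylor_isBigO hsmooth).congr_left fun ε ↦ ?_
  rw [ψ₅'_eq_intervalAverage]
  simp only [sum_range_succ, sum_range_zero, mul_zero, mul_one, iteratedDeriv_zero, hsecond, hone]
  norm_num [Nat.factorial, cos_sq']
  ring

theorem psi5bar_taylor (θ : ℝ) (hθ : θ ∈ Set.Ioo (-(π / 2)) (π / 2)) :
    (fun ε : ℝ => ψ₅' θ ε - (-sin θ - (5 - 8 * cos θ ^ 2) * sin θ * ε ^ 2))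
      =O[𝓝[>] (0 : ℝ)] fun ε => ε ^ 4 :=
  (psi5bar_taylor_general θ).mono (nhdsGT_le_nhdsNE 0)
end

section
/- Fix θ ∈ (−π/2, π/2). Then ψ₂(ε)·Δ(ε) − [1 + (2/3)·cos²θ·ε² + (2/3)·cos²θ·(2 − (11/5)·cos²θ)·ε⁴] = O(ε⁶) as ε → 0⁺. -/
open Real Filter Asymptotics Topology

/-!
Up to the factor `(2ε)⁻¹`, `ψ₂` integrates `(1 - 2 x sin θ + x²)⁻¹`, which is the generating
function `∑ Uₖ(sin θ) xᵏ` of the Chebyshev polynomials of the second kind. Averaging over `[-ε, ε]`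
kills the odd powers and divides the coefficient of `x²ʲ` by `2j + 1`. The expansion of `Δ` is found
by comparing squares, since `Δ²` is a polynomial in `ε`. It remains to multiply the two expansions.
-/

open MeasureTheory Polynomial Polynomial.Chebyshev Finset

section Asymptotics

variable {α 𝕜 : Type*} [NormedField 𝕜] {l : Filter α}

theorem isBigO_sub_of_sq_sub_sq {f g h : α → 𝕜} {a b : 𝕜}
    (hf : Tendsto f l (𝓝 a)) (hg : Tendsto g l (𝓝 b)) (hab : a + b ≠ 0)
    (hsq : (fun x => f x ^ 2 - g x ^ 2) =O[l] h) : (fun x => f x - g x) =O[l] h := by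
  have hsum : Tendsto (fun x => f x + g x) l (𝓝 (a + b)) := hf.add hg
  have hmul : (fun x => (f x ^ 2 - g x ^ 2) * (f x + g x)⁻¹) =O[l] h := by
    simpa only [mul_one] using hsq.mul ((hsum.inv₀ hab).isBigO_one 𝕜)
  refine hmul.congr' ?_ .rfl
  filter_upwards [hsum.eventually_ne hab] with x hx
  rw [sq_sub_sq]
  field_simp

theorem isBigO_mul_sub_mul {f₁ f₂ g₁ g₂ h : α → 𝕜} {a b : 𝕜}
    (hf₂ : Tendsto f₂ l (𝓝 a)) (hg₁ : Tendsto g₁ l (𝓝 b))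
    (h₁ : (fun x => f₁ x - g₁ x) =O[l] h) (h₂ : (fun x => f₂ x - g₂ x) =O[l] h) :
    (fun x => f₁ x * f₂ x - g₁ x * g₂ x) =O[l] h := by
  have hleft := h₁.mul (hf₂.isBigO_one 𝕜)
  have hright := (hg₁.isBigO_one 𝕜).mul h₂
  simp only [mul_one, one_mul] at hleft hright
  exact (hleft.add hright).congr_left fun x => by ring

theorem isBigO_pow_mul_of_continuousAt {r : 𝕜 → 𝕜} (hr : ContinuousAt r 0) (n : ℕ) :
    (fun x => x ^ n * r x) =O[𝓝 0] fun x => x ^ n := by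
  simpa using (isBigO_refl (fun x : 𝕜 => x ^ n) (𝓝 0)).mul (hr.tendsto.isBigO_one 𝕜)

end Asymptotics

section IntervalAverage

theorem isBigO_average_neg_self {E : Type*} [NormedAddCommGroup E] [NormedSpace ℝ E] {f : ℝ → E}
    {n : ℕ} (hf : f =O[𝓝 0] fun x => x ^ n) :
    (fun ε => ⨍ x in (-ε)..ε, f x) =O[𝓝 0] fun ε => ε ^ n := by
  obtain ⟨C, hC, hbound⟩ := hf.exists_nonneg
  obtain ⟨δ, hδ, hball⟩ := Metric.eventually_nhds_iff.1 hbound.bound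
  refine .of_bound C ?_
  filter_upwards [Metric.ball_mem_nhds 0 hδ] with ε hε
  have hpoint : ∀ x ∈ Set.uIoc (-ε) ε, ‖f x‖ ≤ C * ‖ε ^ n‖ := by
    intro x hx
    have hxε : |x| ≤ |ε| := by
      rcases Set.mem_uIoc.1 hx with h | h <;> grind
    have hxδ : dist x 0 < δ := by
      rw [Real.dist_0_eq_abs]
      exact hxε.trans_lt (by simpa using hε)
    calc ‖f x‖ ≤ C * ‖x ^ n‖ := hball hxδ
      _ ≤ C * ‖ε ^ n‖ := by simp only [norm_pow, Real.norm_eq_abs]; gcongr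
  have hint := intervalIntegral.norm_integral_le_of_norm_le_const hpoint
  rw [interval_average_eq, norm_smul, norm_inv, Real.norm_eq_abs]
  exact inv_mul_le_of_le_mul₀ (abs_nonneg _) (by positivity) (by rwa [mul_comm])

theorem average_neg_self_sum_range_two_mul (a : ℕ → ℝ) (m : ℕ) {ε : ℝ} (hε : ε ≠ 0) :
    ⨍ x in (-ε)..ε, ∑ k ∈ range (2 * m), a k * x ^ k =
      ∑ j ∈ range m, a (2 * j) / (2 * j + 1) * ε ^ (2 * j) := by
  have hint (k : ℕ) : IntervalIntegrable (fun x => a k * x ^ k) volume (-ε) ε :=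
    (by fun_prop : Continuous fun x => a k * x ^ k).intervalIntegrable _ _
  rw [interval_average_eq_div, intervalIntegral.integral_finsetSum fun k _ => hint k]
  simp only [intervalIntegral.integral_const_mul, integral_pow]
  induction m with
  | zero => simp
  | succ m ih =>
    have hodd : (-ε) ^ (2 * m + 1) = -ε ^ (2 * m + 1) := (odd_two_mul_add_one m).neg_pow ε
    have heven : (-ε) ^ (2 * m + 1 + 1) = ε ^ (2 * m + 1 + 1) := Even.neg_pow (by grind) ε
    rw [mul_add_one, sum_range_succ, sum_range_succ, add_div, add_div, ih, sum_range_succ,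
      hodd, heven]
    push_cast
    field_simp
    ring

-- `ε = 0` is excluded: there the average is `0` by convention, while the sum is `a 0`.
theorem isBigO_average_neg_self_sub_sum {f : ℝ → ℝ} {a : ℕ → ℝ} {m : ℕ}
    (hint : ∀ᶠ ε in 𝓝 0, IntervalIntegrable f volume (-ε) ε)
    (hf : (fun x => f x - ∑ k ∈ range (2 * m), a k * x ^ k) =O[𝓝 0] fun x => x ^ (2 * m)) :
    (fun ε => (⨍ x in (-ε)..ε, f x) - ∑ j ∈ range m, a (2 * j) / (2 * j + 1) * ε ^ (2 * j))
      =O[𝓝[≠] 0] fun ε => ε ^ (2 * m) := by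
  refine ((isBigO_average_neg_self hf).mono nhdsWithin_le_nhds).congr' ?_ .rfl
  filter_upwards [hint.filter_mono nhdsWithin_le_nhds, self_mem_nhdsWithin] with ε hfε hε
  have hsum : Continuous fun x : ℝ => ∑ k ∈ range (2 * m), a k * x ^ k := by fun_prop
  rw [← average_neg_self_sum_range_two_mul a m hε]
  simp only [interval_average_eq_div]
  rw [intervalIntegral.integral_sub hfε (hsum.intervalIntegrable _ _), sub_div]

end IntervalAverage

section ChebyshevU

theorem one_sub_two_mul_add_sq_mul_sum_U {R : Type*} [CommRing R] (s x : R) (n : ℕ) :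
    (1 - 2 * s * x + x ^ 2) * ∑ k ∈ range n, (U R k).eval s * x ^ k =
      1 - x ^ n * ((U R n).eval s - (U R (n - 1)).eval s * x) := by
  induction n with
  | zero => simp
  | succ n ih =>
    have hrec : (U R (n + 1)).eval s = 2 * s * (U R n).eval s - (U R (n - 1)).eval s := by
      simp [U_add_one]
    rw [sum_range_succ, mul_add, ih]
    push_cast
    rw [add_sub_cancel_right, hrec]
    ring

theorem isBigO_inv_one_sub_two_mul_add_sq_sub_sum_U {𝕜 : Type*} [NormedField 𝕜] (s : 𝕜) (n : ℕ) :
    (fun x => (1 - 2 * s * x + x ^ 2)⁻¹ - ∑ k ∈ range n, (U 𝕜 k).eval s * x ^ k)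
      =O[𝓝 0] fun x => x ^ n := by
  have hcont : ContinuousAt (fun x : 𝕜 => 1 - 2 * s * x + x ^ 2) 0 := by fun_prop
  have hrem : ContinuousAt (fun x : 𝕜 =>
      ((U 𝕜 n).eval s - (U 𝕜 (n - 1)).eval s * x) * (1 - 2 * s * x + x ^ 2)⁻¹) 0 :=
    .mul (by fun_prop) (hcont.inv₀ (by simp))
  refine (isBigO_pow_mul_of_continuousAt hrem n).congr' ?_ .rfl
  have hne : ∀ᶠ x in 𝓝 0, 1 - 2 * s * x + x ^ 2 ≠ 0 := hcont.eventually_ne (by simp)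
  filter_upwards [hne] with x hx
  rw [← mul_assoc, ← div_eq_mul_inv, div_eq_iff hx, sub_mul, inv_mul_cancel₀ hx,
    mul_comm (∑ _ ∈ _, _), one_sub_two_mul_add_sq_mul_sum_U, sub_sub_cancel]

theorem U_four (R : Type*) [CommRing R] : U R 4 = 16 * X ^ 4 - 12 * X ^ 2 + 1 := by
  have h₃ : U R 3 = 2 * X * U R 2 - U R 1 := U_add_two R 1
  have h₄ : U R 4 = 2 * X * U R 3 - U R 2 := U_add_two R 2
  rw [h₄, h₃, U_two, U_one]
  ring

end ChebyshevU

theorem ψ₂_eq_average (θ ε : ℝ) :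
    ψ₂ θ ε = ⨍ x in (-ε)..ε, (1 - 2 * sin θ * x + x ^ 2)⁻¹ := by
  have hquad (x : ℝ) : (x - sin θ) ^ 2 + cos θ ^ 2 = 1 - 2 * sin θ * x + x ^ 2 := by
    linear_combination sin_sq_add_cos_sq θ
  rw [interval_average_eq, ψ₂, smul_eq_mul, sub_neg_eq_add, ← two_mul, one_div]
  simp only [hquad]

theorem isBigO_ψ₂_sub_sum_U (θ : ℝ) (m : ℕ) :
    (fun ε => ψ₂ θ ε - ∑ j ∈ range m, (U ℝ (2 * j)).eval (sin θ) / (2 * j + 1) * ε ^ (2 * j))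
      =O[𝓝[≠] 0] fun ε => ε ^ (2 * m) := by
  have hcont : ContinuousAt (fun x : ℝ => (1 - 2 * sin θ * x + x ^ 2)⁻¹) 0 :=
    ContinuousAt.inv₀ (by fun_prop) (by simp)
  have hmeas : Measurable fun x : ℝ => (1 - 2 * sin θ * x + x ^ 2)⁻¹ := by fun_prop
  have hint : ∀ᶠ ε in 𝓝 (0 : ℝ),
      IntervalIntegrable (fun x => (1 - 2 * sin θ * x + x ^ 2)⁻¹) volume (-ε) ε :=
    hcont.tendsto.eventually_intervalIntegrable hmeas.stronglyMeasurable.stronglyMeasurableAtFilter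
      (volume.finiteAt_nhds 0) (by simpa using (continuous_neg (G := ℝ)).tendsto 0) tendsto_id
  simpa [ψ₂_eq_average] using isBigO_average_neg_self_sub_sum hint
    (isBigO_inv_one_sub_two_mul_add_sq_sub_sum_U (sin θ) (2 * m))

theorem isBigO_ψ₂_sub_taylor (θ : ℝ) :
    (fun ε => ψ₂ θ ε - (1 + (3 - 4 * cos θ ^ 2) / 3 * ε ^ 2 +
      (5 - 20 * cos θ ^ 2 + 16 * cos θ ^ 4) / 5 * ε ^ 4)) =O[𝓝[≠] 0] fun ε => ε ^ 6 := by
  have hU₂ : (U ℝ 2).eval (sin θ) = 3 - 4 * cos θ ^ 2 := by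
    simp only [U_two, eval_sub, eval_mul, eval_ofNat, eval_pow, eval_X, eval_one]
    linear_combination 4 * sin_sq_add_cos_sq θ
  have hU₄ : (U ℝ 4).eval (sin θ) = 5 - 20 * cos θ ^ 2 + 16 * cos θ ^ 4 := by
    simp only [U_four, eval_add, eval_sub, eval_mul, eval_ofNat, eval_pow,
      eval_X, eval_one]
    linear_combination (16 * sin θ ^ 2 - 16 * cos θ ^ 2 + 4) * sin_sq_add_cos_sq θ
  refine (isBigO_ψ₂_sub_sum_U θ 3).congr_left fun ε => ?_
  norm_num [sum_range_succ, hU₂, hU₄]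

theorem continuous_Δ (θ : ℝ) : Continuous (Δ θ) := by
  unfold Δ
  fun_prop

theorem isBigO_Δ_sub_taylor (θ : ℝ) :
    (fun ε => Δ θ ε - (1 + (2 * cos θ ^ 2 - 1) * ε ^ 2 +
      (2 * cos θ ^ 2 - 2 * cos θ ^ 4) * ε ^ 4)) =O[𝓝 0] fun ε => ε ^ 6 := by
  set p : ℝ → ℝ := fun ε => 1 + (2 * cos θ ^ 2 - 1) * ε ^ 2 +
    (2 * cos θ ^ 2 - 2 * cos θ ^ 4) * ε ^ 4 with hp
  let r : ℝ → ℝ := fun ε => -(2 * (2 * cos θ ^ 2 - 1) * (2 * cos θ ^ 2 - 2 * cos θ ^ 4) +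
    (2 * cos θ ^ 2 - 2 * cos θ ^ 4) ^ 2 * ε ^ 2)
  have hsq (ε : ℝ) : Δ θ ε ^ 2 - p ε ^ 2 = ε ^ 6 * r ε := by
    rw [Δ, Real.sq_sqrt (by positivity)]
    ring
  have hpcont : Continuous p := by fun_prop
  have hrcont : Continuous r := by fun_prop
  refine isBigO_sub_of_sq_sub_sq ((continuous_Δ θ).tendsto 0) (hpcont.tendsto 0)
    (by norm_num [Δ, hp]) ?_
  exact (isBigO_pow_mul_of_continuousAt hrcont.continuousAt 6).congr_left fun ε => (hsq ε).symm

theorem psi2_Delta_taylor_general (θ : ℝ) :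
    (fun ε : ℝ =>
        ψ₂ θ ε * Δ θ ε -
          (1 + (2 / 3) * cos θ ^ 2 * ε ^ 2 +
            (2 / 3) * cos θ ^ 2 * (2 - (11 / 5) * cos θ ^ 2) * ε ^ 4))
      =O[𝓝[≠] (0 : ℝ)] fun ε => ε ^ 6 := by
  set a₂ := (3 - 4 * cos θ ^ 2) / 3 with ha₂
  set a₄ := (5 - 20 * cos θ ^ 2 + 16 * cos θ ^ 4) / 5 with ha₄
  set b₂ := 2 * cos θ ^ 2 - 1 with hb₂
  set b₄ := 2 * cos θ ^ 2 - 2 * cos θ ^ 4 with hb₄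
  have hψ : Continuous fun ε : ℝ => 1 + a₂ * ε ^ 2 + a₄ * ε ^ 4 := by fun_prop
  have hrem : Continuous fun ε : ℝ => a₂ * b₄ + a₄ * b₂ + a₄ * b₄ * ε ^ 2 := by fun_prop
  have hprod := isBigO_mul_sub_mul
    (((continuous_Δ θ).tendsto 0).mono_left nhdsWithin_le_nhds)
    ((hψ.tendsto 0).mono_left nhdsWithin_le_nhds)
    (isBigO_ψ₂_sub_taylor θ) ((isBigO_Δ_sub_taylor θ).mono nhdsWithin_le_nhds)
  have htail := (isBigO_pow_mul_of_continuousAt hrem.continuousAt 6).mono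
    (nhdsWithin_le_nhds (s := {0}ᶜ))
  refine (hprod.add htail).congr_left fun ε => ?_
  rw [ha₂, ha₄, hb₂, hb₄]
  ring

theorem psi2_Delta_taylor (θ : ℝ) (hθ : θ ∈ Set.Ioo (-(π / 2)) (π / 2)) :
    (fun ε : ℝ =>
        ψ₂ θ ε * Δ θ ε -
          (1 + (2 / 3) * cos θ ^ 2 * ε ^ 2 +
            (2 / 3) * cos θ ^ 2 * (2 - (11 / 5) * cos θ ^ 2) * ε ^ 4))
      =O[𝓝[>] (0 : ℝ)] fun ε => ε ^ 6 :=
  (psi2_Delta_taylor_general θ).mono (nhdsGT_le_nhdsNE 0)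
end
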